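/- Let X ⊆ (ℂ^n,0) be a germ of an analytic variety and f ∈ m a holomorphic function germ. The pair (f, X) is relatively quasihomogeneous if and only if there exists a logarithmic vector field δ ∈ Θ_X with δ(0) = 0 and δ(f) = f whose eigenvalues sp(δ) = (w_1,...,w_n) are all positive rational numbers. -/

import Mathlib

open Filter Topology Polynomial

set_option maxHeartbeats 1000000
set_option synthInstance.maxHeartbeats 1000000

noncomputable section

/-- The algebra structure on germs of complex valued functions. -/
instance Filter.Germ.instAlgebraComplex {α : Type*} (l : Filter α) :
    Algebra ℂ (Filter.Germ l ℂ) where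
  algebraMap := (Filter.Germ.coeRingHom l).comp (algebraMap ℂ (α → ℂ))
  commutes' := fun c g => mul_comm _ _
  smul_def' := fun c g => Filter.Germ.inductionOn g fun f => rfl

/-- The local algebra `𝒪ₙ` of germs at `0 ∈ ℂⁿ` of holomorphic functions,
realized as the subalgebra of germs at `0` admitting an analytic representative. -/
def On (n : ℕ) : Subalgebra ℂ (Filter.Germ (𝓝 (0 : Fin n → ℂ)) ℂ) where
  carrier := {g | ∃ f : (Fin n → ℂ) → ℂ,
    AnalyticAt ℂ f 0 ∧ (f : Filter.Germ (𝓝 (0 : Fin n → ℂ)) ℂ) = g}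
  mul_mem' := by
    rintro a b ⟨f, hf, rfl⟩ ⟨g, hg, rfl⟩
    exact ⟨f * g, hf.mul hg, rfl⟩
  add_mem' := by
    rintro a b ⟨f, hf, rfl⟩ ⟨g, hg, rfl⟩
    exact ⟨f + g, hf.add hg, rfl⟩
  algebraMap_mem' := fun c => ⟨fun _ => c, analyticAt_const, rfl⟩

variable {n : ℕ}

/-- Existence of an analytic representative for an element of `𝒪ₙ`. -/
lemma On.exists_rep (g : On n) : ∃ f : (Fin n → ℂ) → ℂ,
    AnalyticAt ℂ f 0 ∧ (f : Filter.Germ (𝓝 (0 : Fin n → ℂ)) ℂ) = (g : Filter.Germ _ ℂ) :=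
  g.2

/-- A chosen analytic representative of a germ in `𝒪ₙ`. -/
def On.rep (g : On n) : (Fin n → ℂ) → ℂ := (On.exists_rep g).choose

lemma On.rep_analyticAt (g : On n) : AnalyticAt ℂ (On.rep g) 0 :=
  (On.exists_rep g).choose_spec.1

lemma On.rep_spec (g : On n) :
    (On.rep g : Filter.Germ (𝓝 (0 : Fin n → ℂ)) ℂ) = (g : Filter.Germ _ ℂ) :=
  (On.exists_rep g).choose_spec.2

/-- Build an element of `𝒪ₙ` from an analytic function. -/
def mkOn {n : ℕ} (f : (Fin n → ℂ) → ℂ) (hf : AnalyticAt ℂ f 0) : On n :=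
  ⟨(f : Filter.Germ (𝓝 (0 : Fin n → ℂ)) ℂ), ⟨f, hf, rfl⟩⟩

/-- The `i`-th partial derivative, as an operation on `𝒪ₙ`. -/
def pd (i : Fin n) (g : On n) : On n :=
  mkOn (fun x => fderiv ℂ (On.rep g) x (Pi.single i 1)) (by
    have h := ((ContinuousLinearMap.apply ℂ ℂ (Pi.single i 1)).analyticAt
      (fderiv ℂ (On.rep g) 0)).comp (On.rep_analyticAt g).fderiv
    exact h)

/-- Restriction of germs at `0` to germs along a finer filter. -/
def restrictGerm {l : Filter (Fin n → ℂ)} (hl : l ≤ 𝓝 (0 : Fin n → ℂ)) :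
    Filter.Germ (𝓝 (0 : Fin n → ℂ)) ℂ →+* Filter.Germ l ℂ where
  toFun g := g.compTendsto id (Filter.tendsto_id'.2 hl)
  map_one' := rfl
  map_mul' a b := Filter.Germ.inductionOn₂ a b fun f g => rfl
  map_zero' := rfl
  map_add' a b := Filter.Germ.inductionOn₂ a b fun f g => rfl

/-- Evaluation of germs restricted along `l ≤ 𝓝 0`, as a ring homomorphism on `𝒪ₙ`. -/
def restrictOn (n : ℕ) {l : Filter (Fin n → ℂ)} (hl : l ≤ 𝓝 (0 : Fin n → ℂ)) :
    On n →+* Filter.Germ l ℂ :=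
  (restrictGerm hl).comp (On n).val.toRingHom

/-- The ideal `I_X ⊆ 𝒪ₙ` of germs vanishing on a set `X` near `0`. -/
def IX (n : ℕ) (X : Set (Fin n → ℂ)) : Ideal (On n) :=
  RingHom.ker (restrictOn n (nhdsWithin_le_nhds (s := X)))

/-- The maximal ideal `𝔪 ⊂ 𝒪ₙ` of germs vanishing at the origin. -/
def mId (n : ℕ) : Ideal (On n) :=
  RingHom.ker (restrictOn n (pure_le_nhds (0 : Fin n → ℂ)))

/-- `X` is the germ at `0` of an analytic variety: `0 ∈ X` and, near `0`, `X` coincides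
with the common zero locus of finitely many holomorphic functions. -/
def IsAnalyticGermAt0 (n : ℕ) (X : Set (Fin n → ℂ)) : Prop :=
  (0 : Fin n → ℂ) ∈ X ∧
    ∃ (m : ℕ) (g : Fin m → (Fin n → ℂ) → ℂ),
      (∀ j, AnalyticAt ℂ (g j) 0) ∧
      ∀ᶠ x in 𝓝 (0 : Fin n → ℂ), (x ∈ X ↔ ∀ j, g j x = 0)

/-- The action `δ(g) = Σ δᵢ ∂g/∂xᵢ` of a vector field `δ ∈ Θ ≅ 𝒪ₙⁿ` on `g ∈ 𝒪ₙ`. -/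
def applyVF (δ : Fin n → On n) (g : On n) : On n := ∑ i, δ i * pd i g

lemma applyVF_add (a b : Fin n → On n) (g : On n) :
    applyVF (a + b) g = applyVF a g + applyVF b g := by
  simp [applyVF, add_mul, Finset.sum_add_distrib]

lemma applyVF_smul (c : On n) (a : Fin n → On n) (g : On n) :
    applyVF (c • a) g = c * applyVF a g := by
  simp [applyVF, Finset.mul_sum, smul_eq_mul, mul_assoc]

/-- For fixed `f`, the map `δ ↦ δ(f)` as an `𝒪ₙ`-linear map `Θ → 𝒪ₙ`. -/
def gradMap (n : ℕ) (f : On n) : (Fin n → On n) →ₗ[On n] On n where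
  toFun δ := applyVF δ f
  map_add' a b := applyVF_add a b f
  map_smul' c a := applyVF_smul c a f

/-- The module `Θ_X` of logarithmic vector fields of `X`, i.e. vector fields
preserving the ideal `I_X`. -/
def ThetaX (n : ℕ) (X : Set (Fin n → ℂ)) : Submodule (On n) (Fin n → On n) where
  carrier := {δ | ∀ g ∈ IX n X, applyVF δ g ∈ IX n X}
  add_mem' := by
    intro a b ha hb g hg
    rw [applyVF_add]
    exact Ideal.add_mem _ (ha g hg) (hb g hg)
  zero_mem' := by
    intro g hg
    have h0 : applyVF (0 : Fin n → On n) g = 0 := by simp [applyVF]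
    rw [h0]; exact Ideal.zero_mem _
  smul_mem' := by
    intro c a ha g hg
    rw [applyVF_smul]
    exact Ideal.mul_mem_left _ _ (ha g hg)

/-- The module `Θ_Y` of vector fields tangent to the hypersurface `Y = f⁻¹(0)`,
i.e. `δ(f) ∈ ⟨f⟩`. -/
def ThetaF (n : ℕ) (f : On n) : Submodule (On n) (Fin n → On n) :=
  Submodule.comap (gradMap n f) (Ideal.span {f})

/-- The module `H_Y` of Hamiltonian vector fields of `f`, i.e. `δ(f) = 0`. -/
def HamF (n : ℕ) (f : On n) : Submodule (On n) (Fin n → On n) :=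
  LinearMap.ker (gradMap n f)

/-- The Bruce–Roberts ideal `df(Θ_X) ⊆ 𝒪ₙ`. -/
def BRIdeal (n : ℕ) (X : Set (Fin n → ℂ)) (f : On n) : Ideal (On n) :=
  Submodule.map (gradMap n f) (ThetaX n X)

/-- The Jacobian ideal `J(f) = ⟨∂f/∂x₁, …, ∂f/∂xₙ⟩`. -/
def Jac (n : ℕ) (f : On n) : Ideal (On n) :=
  Ideal.span (Set.range fun i => pd i f)

/-- The ideal `J(f,h)` generated by the `2×2` minors of the Jacobian matrix of `(f,h)`. -/
def Jmin (n : ℕ) (f h : On n) : Ideal (On n) :=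
  Ideal.span (Set.range fun p : Fin n × Fin n => pd p.1 f * pd p.2 h - pd p.2 f * pd p.1 h)

/-- The Milnor number `μ(f)`. -/
def mu (n : ℕ) (f : On n) : ℕ := Module.finrank ℂ (On n ⧸ Jac n f)

/-- The Tjurina number `τ(f)`. -/
def tau (n : ℕ) (f : On n) : ℕ :=
  Module.finrank ℂ (On n ⧸ (Jac n f + Ideal.span {f}))

/-- The Bruce–Roberts Milnor number `μ_X(f)`. -/
def muX (n : ℕ) (X : Set (Fin n → ℂ)) (f : On n) : ℕ :=
  Module.finrank ℂ (On n ⧸ BRIdeal n X f)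

/-- The Bruce–Roberts Tjurina number `τ_X(f)`. -/
def tauX (n : ℕ) (X : Set (Fin n → ℂ)) (f : On n) : ℕ :=
  Module.finrank ℂ (On n ⧸ (BRIdeal n X f + Ideal.span {f}))

/-- The value at the origin of a germ in `𝒪ₙ`. -/
def ev0 (g : On n) : ℂ := On.rep g 0

/-- The linear part `j¹δ` of a vector field `δ`, as the matrix `(∂δⱼ/∂xᵢ)(0)`. -/
def linPart (δ : Fin n → On n) : Matrix (Fin n) (Fin n) ℂ :=
  Matrix.of fun i j => ev0 (pd i (δ j))

/-- The eigenvalues (with multiplicities) of the linear part of `δ` are given by `w`. -/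
def EigsEq (δ : Fin n → On n) (w : Fin n → ℚ) : Prop :=
  (linPart δ).charpoly = ∏ i, (Polynomial.X - Polynomial.C ((w i : ℂ)))

/-- The germ at `0` of the coordinate function `xᵢ`. -/
def coordG (i : Fin n) : On n :=
  mkOn (fun x : Fin n → ℂ => x i)
    ((ContinuousLinearMap.proj (R := ℂ) (φ := fun _ : Fin n => ℂ) i).analyticAt _)

/-- `g` is quasihomogeneous of degree `d` with respect to the weights `w` (in the given
coordinates): the Euler identity `Σ wᵢ xᵢ ∂g/∂xᵢ = d g` holds. -/
def IsQH (n : ℕ) (w : Fin n → ℚ) (d : ℚ) (g : On n) : Prop :=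
  ∑ i, (w i : ℂ) • (coordG i * pd i g) = (d : ℂ) • g

/-- A germ of a biholomorphic change of coordinates at `0 ∈ ℂⁿ`. -/
structure CoordChange (n : ℕ) where
  toFun : (Fin n → ℂ) → (Fin n → ℂ)
  invFun : (Fin n → ℂ) → (Fin n → ℂ)
  analyticAt : AnalyticAt ℂ toFun 0
  inv_analyticAt : AnalyticAt ℂ invFun 0
  map_zero : toFun 0 = 0
  inv_map_zero : invFun 0 = 0
  left_inv : ∀ᶠ x in 𝓝 (0 : Fin n → ℂ), invFun (toFun x) = x
  right_inv : ∀ᶠ x in 𝓝 (0 : Fin n → ℂ), toFun (invFun x) = x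

lemma CoordChange.tendsto (φ : CoordChange n) :
    Filter.Tendsto φ.toFun (𝓝 (0 : Fin n → ℂ)) (𝓝 (0 : Fin n → ℂ)) := by
  have h := φ.analyticAt.continuousAt
  rwa [ContinuousAt, φ.map_zero] at h

/-- The pullback (composition) of a germ `g ∈ 𝒪ₙ` under a change of coordinates. -/
def pullback (φ : CoordChange n) (g : On n) : On n :=
  ⟨(g : Filter.Germ (𝓝 (0 : Fin n → ℂ)) ℂ).compTendsto φ.toFun φ.tendsto, by
    refine ⟨On.rep g ∘ φ.toFun, ?_, ?_⟩
    · have h := On.rep_analyticAt g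
      rw [← φ.map_zero] at h
      exact h.comp φ.analyticAt
    · rw [← On.rep_spec g]
      exact (Filter.Germ.coe_compTendsto _ φ.tendsto).symm⟩

/-- Definition 1.1: the pair `(f, X)` is relatively quasihomogeneous with respect to the
weights `w`: in suitable coordinates, `f` is quasihomogeneous of degree `1` and `I_X` admits
a system of quasihomogeneous generators of positive degrees, all with respect to `w`. -/
def RelQH (n : ℕ) (X : Set (Fin n → ℂ)) (f : On n) (w : Fin n → ℚ) : Prop :=
  ∃ φ : CoordChange n,
    IsQH n w 1 (pullback φ f) ∧
    ∃ (m : ℕ) (h : Fin m → On n) (d : Fin m → ℚ),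
      Ideal.span (Set.range h) = IX n X ∧ (∀ j, 0 < d j) ∧
      ∀ j, IsQH n w (d j) (pullback φ (h j))

/-- The variety `X` is quasihomogeneous with respect to the weights `w`: in suitable
coordinates, `I_X` admits a system of quasihomogeneous generators of positive degrees. -/
def VarQH (n : ℕ) (X : Set (Fin n → ℂ)) (w : Fin n → ℚ) : Prop :=
  ∃ φ : CoordChange n,
    ∃ (m : ℕ) (h : Fin m → On n) (d : Fin m → ℚ),
      Ideal.span (Set.range h) = IX n X ∧ (∀ j, 0 < d j) ∧
      ∀ j, IsQH n w (d j) (pullback φ (h j))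

instance (f : On n) : HasQuotient (↥(ThetaF n f)) (Submodule ↥(On n) ↥(ThetaF n f)) :=
  Submodule.hasQuotient (R := ↥(On n)) (M := ↥(ThetaF n f))

/-!
If `(f, X)` is quasihomogeneous in some coordinates, their Euler field is logarithmic, and the
gradients of the coordinates diagonalise its linear part.

Conversely, let `δ` be a logarithmic field with `δ(f) = f` and positive rational eigenvalues.
Positivity excludes small divisors: on a high power of the maximal ideal every `δ - c` is
surjective, by a Neumann series in weighted `ℓ¹` norms. Hence the generalized eigenvectors of the
linear part, which exist on the finite-dimensional quotients `𝒪ₙ ⧸ 𝔪 ^ M`, lift to convergent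
generalized eigenfunctions of `δ`, and these form coordinates `y` with positive weights `w`.
Since `δ` is a derivation, its generalized eigenspaces multiply like a grading, so each of them is
spanned by the finitely many monomials in `y` of the corresponding weight. On such a space the
Euler field `∑ wⱼ yⱼ ∂/∂yⱼ` acts as a scalar: `f` has weight `1`, and the ideal of `X`, being
stable under `δ`, is generated by the quasihomogeneous germs it contains. Both spanning statements
rest on Krull's intersection theorem; the ring `𝒪ₙ` is Noetherian by Grauert's division theorem
over polydiscs of radii `p ^ (-s)` for distinct primes `p`.
-/

open scoped NNReal ENNReal

section MultiPow

variable {σ M : Type*} [CommMonoid M]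

/-- The value `x ^ α = ∏ xᵢ ^ αᵢ` of the monomial with exponent `α` at a family `x`. -/
def multiPow (x : σ → M) (α : σ →₀ ℕ) : M := α.prod fun i k => x i ^ k

@[simp] lemma multiPow_zero (x : σ → M) : multiPow x 0 = 1 := Finsupp.prod_zero_index

lemma multiPow_add (x : σ → M) (α β : σ →₀ ℕ) :
    multiPow x (α + β) = multiPow x α * multiPow x β :=
  Finsupp.prod_add_index' (fun _ => pow_zero _) fun _ _ _ => pow_add _ _ _

@[simp] lemma multiPow_single (x : σ → M) (i : σ) (k : ℕ) :
    multiPow x (Finsupp.single i k) = x i ^ k :=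
  Finsupp.prod_single_index (pow_zero _)

lemma map_multiPow {N F : Type*} [CommMonoid N] [FunLike F M N] [MonoidHomClass F M N] (f : F)
    (x : σ → M) (α : σ →₀ ℕ) : f (multiPow x α) = multiPow (fun i => f (x i)) α := by
  simp only [multiPow, map_finsuppProd, map_pow]

lemma multiPow_const (r : M) (α : σ →₀ ℕ) : multiPow (fun _ : σ => r) α = r ^ α.degree := by
  simp only [multiPow, Finsupp.prod, Finset.prod_pow_eq_pow_sum, Finsupp.degree_apply]

lemma mul_multiPow (x y : σ → M) (α : σ →₀ ℕ) :
    multiPow (fun i => x i * y i) α = multiPow x α * multiPow y α := by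
  simp only [multiPow, mul_pow, Finsupp.prod_mul]

lemma multiPow_mono {ρ ρ' : σ → ℝ≥0} (h : ∀ i, ρ i ≤ ρ' i) (α : σ →₀ ℕ) :
    multiPow ρ α ≤ multiPow ρ' α :=
  Finset.prod_le_prod' fun i _ => pow_le_pow_left' (h i) _

lemma multiPow_ne_zero {M₀ : Type*} [CommMonoidWithZero M₀] [NoZeroDivisors M₀] [Nontrivial M₀]
    {x : σ → M₀} (hx : ∀ i, x i ≠ 0) (α : σ →₀ ℕ) : multiPow x α ≠ 0 :=
  Finset.prod_ne_zero_iff.2 fun i _ => pow_ne_zero _ (hx i)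

lemma multiPow_pos {ρ : σ → ℝ≥0} (h : ∀ i, 0 < ρ i) (α : σ →₀ ℕ) : 0 < multiPow ρ α :=
  (multiPow_ne_zero (fun i => (h i).ne') α).bot_lt

end MultiPow

section WeightedNorm

variable {σ 𝕜 : Type*} [NormedField 𝕜] {ρ ρ' : σ → ℝ≥0} {c d : MvPowerSeries σ 𝕜}

/-- The weighted `ℓ¹` norm `∑ ‖c_α‖ ρ ^ α` of a power series; it is finite when the series
converges absolutely on the polydisc of radius `ρ`. -/
def wnorm (ρ : σ → ℝ≥0) (c : MvPowerSeries σ 𝕜) : ℝ≥0∞ :=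
  ∑' α, ‖MvPowerSeries.coeff α c‖ₑ * (multiPow ρ α : ℝ≥0)

lemma wnorm_mono (h : ∀ i, ρ i ≤ ρ' i) (c : MvPowerSeries σ 𝕜) : wnorm ρ c ≤ wnorm ρ' c :=
  ENNReal.tsum_le_tsum fun α => by gcongr; exact multiPow_mono h α

@[simp] lemma wnorm_zero : wnorm ρ (0 : MvPowerSeries σ 𝕜) = 0 := by simp [wnorm]

@[simp] lemma wnorm_neg (ρ : σ → ℝ≥0) (c : MvPowerSeries σ 𝕜) : wnorm ρ (-c) = wnorm ρ c := by
  simp [wnorm]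

lemma wnorm_add_le (ρ : σ → ℝ≥0) (c d : MvPowerSeries σ 𝕜) :
    wnorm ρ (c + d) ≤ wnorm ρ c + wnorm ρ d := by
  simp only [wnorm, ← ENNReal.tsum_add, ← add_mul, map_add]
  exact ENNReal.tsum_le_tsum fun α => by gcongr; exact enorm_add_le _ _

lemma wnorm_sum_le {ι : Type*} (s : Finset ι) (ρ : σ → ℝ≥0) (c : ι → MvPowerSeries σ 𝕜) :
    wnorm ρ (∑ i ∈ s, c i) ≤ ∑ i ∈ s, wnorm ρ (c i) :=
  Finset.le_sum_of_subadditive _ wnorm_zero.le (wnorm_add_le ρ) s c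

lemma wnorm_monomial (ρ : σ → ℝ≥0) (α : σ →₀ ℕ) (a : 𝕜) :
    wnorm ρ (MvPowerSeries.monomial α a) = ‖a‖ₑ * (multiPow ρ α : ℝ≥0) := by
  classical
  rw [wnorm, tsum_eq_single α fun β hβ => by simp [MvPowerSeries.coeff_monomial, hβ],
    MvPowerSeries.coeff_monomial_same]

lemma tsum_antidiagonal {A : Type*} [AddMonoid A] [Finset.HasAntidiagonal A]
    (f : A × A → ℝ≥0∞) :
    ∑' β, ∑ p ∈ Finset.HasAntidiagonal.antidiagonal β, f p = ∑' p, f p := by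
  rw [← Finset.HasAntidiagonal.sigmaAntidiagonalEquivProd.tsum_eq, ENNReal.tsum_sigma']
  exact tsum_congr fun β => by
    rw [tsum_fintype, ← Finset.sum_coe_sort]; rfl

lemma wnorm_mul_le (ρ : σ → ℝ≥0) (c d : MvPowerSeries σ 𝕜) :
    wnorm ρ (c * d) ≤ wnorm ρ c * wnorm ρ d := by
  classical
  rw [wnorm, wnorm, wnorm, ← ENNReal.tsum_mul_right]
  simp only [← ENNReal.tsum_mul_left]
  rw [← ENNReal.tsum_prod, ← tsum_antidiagonal]
  refine ENNReal.tsum_le_tsum fun β => ?_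
  rw [MvPowerSeries.coeff_mul]
  refine (mul_le_mul_left (enorm_sum_le _ _) _).trans_eq ?_
  rw [Finset.sum_mul]
  refine Finset.sum_congr rfl fun p hp => ?_
  rw [enorm_mul, ← Finset.HasAntidiagonal.mem_antidiagonal.1 hp, multiPow_add, ENNReal.coe_mul]
  ring

lemma eq_zero_of_wnorm_eq_zero (hρ : ∀ i, 0 < ρ i) (hc : wnorm ρ c = 0) : c = 0 := by
  ext α
  have hα := ENNReal.tsum_eq_zero.1 hc α
  simpa [(multiPow_pos hρ α).ne'] using hα

lemma wnorm_le_tsum_of_hasSum {ι : Type*} {v : ι → MvPowerSeries σ 𝕜} {u : MvPowerSeries σ 𝕜}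
    (hu : ∀ α, HasSum (fun k => MvPowerSeries.coeff α (v k)) (MvPowerSeries.coeff α u)) :
    wnorm ρ u ≤ ∑' k, wnorm ρ (v k) := by
  simp only [wnorm]
  rw [ENNReal.tsum_comm]
  refine ENNReal.tsum_le_tsum fun α => ?_
  rw [ENNReal.tsum_mul_right, ← (hu α).tsum_eq]
  gcongr
  exact enorm_tsum_le_tsum_enorm

lemma exists_hasSum_coeff [CompleteSpace 𝕜] {ι : Type*} {v : ι → MvPowerSeries σ 𝕜}
    (hρ : ∀ i, 0 < ρ i) (hv : ∑' k, wnorm ρ (v k) ≠ ⊤) :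
    ∃ u : MvPowerSeries σ 𝕜,
      ∀ α, HasSum (fun k => MvPowerSeries.coeff α (v k)) (MvPowerSeries.coeff α u) := by
  have hsum (α : σ →₀ ℕ) : Summable fun k => MvPowerSeries.coeff α (v k) := by
    have hα : ((multiPow ρ α : ℝ≥0) : ℝ≥0∞) ≠ 0 := by
      simpa using (multiPow_pos hρ α).ne'
    have hle : (∑' k, ‖MvPowerSeries.coeff α (v k)‖ₑ) * (multiPow ρ α : ℝ≥0) ≠ ⊤ := by
      rw [← ENNReal.tsum_mul_right]
      exact ne_top_of_le_ne_top hv (ENNReal.tsum_le_tsum fun k => ENNReal.le_tsum α)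
    have hfin : ∑' k, ‖MvPowerSeries.coeff α (v k)‖ₑ ≠ ⊤ := fun h =>
      hle (by rw [h, ENNReal.top_mul hα])
    exact Summable.of_enorm hfin
  exact ⟨fun α => ∑' k, MvPowerSeries.coeff α (v k), fun α => (hsum α).hasSum⟩

lemma exists_tendsto_wnorm_sub_sum [CompleteSpace 𝕜] {v : ℕ → MvPowerSeries σ 𝕜}
    (hρ : ∀ i, 0 < ρ i) (hv : ∑' k, wnorm ρ (v k) ≠ ⊤) :
    ∃ u, wnorm ρ u ≠ ⊤ ∧
      Tendsto (fun m => wnorm ρ (u - ∑ k ∈ Finset.range m, v k)) atTop (𝓝 0) := by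
  obtain ⟨u, hu⟩ := exists_hasSum_coeff hρ hv
  refine ⟨u, ne_top_of_le_ne_top hv (wnorm_le_tsum_of_hasSum hu),
    tendsto_of_tendsto_of_tendsto_of_le_of_le tendsto_const_nhds
      (ENNReal.tendsto_sum_nat_add _ hv) (fun _ => zero_le) fun m => ?_⟩
  refine wnorm_le_tsum_of_hasSum fun α => ?_
  simpa only [map_sub, map_sum] using (hasSum_nat_add_iff' m).2 (hu α)

lemma exists_add_apply_eq_of_wnorm_le [CompleteSpace 𝕜] (hρ : ∀ i, 0 < ρ i)
    (T : Module.End 𝕜 (MvPowerSeries σ 𝕜)) {θ : ℝ≥0∞} (hθ : θ < 1)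
    (hT : ∀ u, wnorm ρ (T u) ≤ θ * wnorm ρ u) {h : MvPowerSeries σ 𝕜} (hh : wnorm ρ h ≠ ⊤) :
    ∃ u, u + T u = h ∧ wnorm ρ u ≠ ⊤ := by
  let v (k : ℕ) : MvPowerSeries σ 𝕜 := ((-T) ^ k) h
  have v_succ (k : ℕ) : v (k + 1) = -T (v k) := by simp only [v, pow_succ']; rfl
  have v_le (k : ℕ) : wnorm ρ (v k) ≤ θ ^ k * wnorm ρ h := by
    induction k with
    | zero => simp [v]
    | succ k ih =>
      rw [v_succ, wnorm_neg, pow_succ', mul_assoc]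
      exact (hT _).trans (by gcongr)
  have hv : ∑' k, wnorm ρ (v k) ≠ ⊤ := by
    refine ne_top_of_le_ne_top ?_ (ENNReal.tsum_le_tsum v_le)
    rw [ENNReal.tsum_mul_right, ENNReal.tsum_geometric]
    exact ENNReal.mul_ne_top (ENNReal.inv_ne_top.2 (tsub_pos_of_lt hθ).ne') hh
  obtain ⟨u, hu_top, hu⟩ := exists_tendsto_wnorm_sub_sum hρ hv
  let s (m : ℕ) : MvPowerSeries σ 𝕜 := ∑ k ∈ Finset.range m, v k
  have s_succ (m : ℕ) : s (m + 1) = h - T (s m) := by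
    simp only [s, Finset.sum_range_succ', v_succ, map_sum, Finset.sum_neg_distrib]
    simp only [v, pow_zero, Module.End.one_apply]
    abel
  have residual_le (m : ℕ) :
      wnorm ρ (u + T u - h) ≤ wnorm ρ (u - s (m + 1)) + wnorm ρ (u - s m) :=
    calc wnorm ρ (u + T u - h) = wnorm ρ ((u - s (m + 1)) + T (u - s m)) := by
          rw [s_succ, map_sub]; congr 1; abel
      _ ≤ wnorm ρ (u - s (m + 1)) + wnorm ρ (T (u - s m)) := wnorm_add_le _ _ _
      _ ≤ wnorm ρ (u - s (m + 1)) + wnorm ρ (u - s m) := by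
          gcongr
          exact (hT _).trans (mul_le_of_le_one_left' hθ.le)
  have hlim := (hu.comp (tendsto_add_atTop_nat 1)).add hu
  rw [add_zero] at hlim
  refine ⟨u, sub_eq_zero.1 (eq_zero_of_wnorm_eq_zero hρ ?_), hu_top⟩
  exact le_zero_iff.1 (ge_of_tendsto' hlim residual_le)

/-- The subalgebra of power series that converge absolutely on some polydisc centred at `0`. -/
def convergent (σ 𝕜 : Type*) [NormedField 𝕜] : Subalgebra 𝕜 (MvPowerSeries σ 𝕜) where
  carrier := {c | ∃ ρ : σ → ℝ≥0, (∀ i, 0 < ρ i) ∧ wnorm ρ c ≠ ⊤}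
  mul_mem' := by
    rintro a b ⟨ρ, hρ, ha⟩ ⟨ρ', hρ', hb⟩
    refine ⟨ρ ⊓ ρ', fun i => lt_min (hρ i) (hρ' i), ?_⟩
    exact ne_top_of_le_ne_top (ENNReal.mul_ne_top ha hb) ((wnorm_mul_le _ a b).trans
      (mul_le_mul' (wnorm_mono (fun _ => min_le_left _ _) a)
        (wnorm_mono (fun _ => min_le_right _ _) b)))
  add_mem' := by
    rintro a b ⟨ρ, hρ, ha⟩ ⟨ρ', hρ', hb⟩
    refine ⟨ρ ⊓ ρ', fun i => lt_min (hρ i) (hρ' i), ?_⟩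
    exact ne_top_of_le_ne_top (ENNReal.add_ne_top.2 ⟨ha, hb⟩) ((wnorm_add_le _ a b).trans
      (add_le_add (wnorm_mono (fun _ => min_le_left _ _) a)
        (wnorm_mono (fun _ => min_le_right _ _) b)))
  algebraMap_mem' r := by
    refine ⟨1, fun _ => one_pos, ?_⟩
    rw [MvPowerSeries.algebraMap_apply, ← MvPowerSeries.monomial_zero_eq_C_apply, wnorm_monomial]
    exact ENNReal.mul_ne_top enorm_ne_top ENNReal.coe_ne_top

lemma monomial_mem_convergent (α : σ →₀ ℕ) (a : 𝕜) :
    MvPowerSeries.monomial α a ∈ convergent σ 𝕜 := by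
  refine ⟨1, fun _ => one_pos, ?_⟩
  rw [wnorm_monomial]
  exact ENNReal.mul_ne_top enorm_ne_top ENNReal.coe_ne_top

/-- The coordinate `xᵢ` as a convergent power series. -/
def convergentX (i : σ) : convergent σ 𝕜 := ⟨MvPowerSeries.X i, monomial_mem_convergent _ 1⟩

end WeightedNorm

section GrauertDivision

variable {σ 𝕜 : Type*} [NormedField 𝕜]

/-- The part of `u` with exponents in `S`, divided by the monomial `x ^ a`. -/
def monomialQuotient (S : Set (σ →₀ ℕ)) (a : σ →₀ ℕ) : Module.End 𝕜 (MvPowerSeries σ 𝕜) where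
  toFun u β := S.indicator (fun γ => MvPowerSeries.coeff γ u) (β + a)
  map_add' u v := funext fun β => by
    simp only [map_add]
    exact congrFun (Set.indicator_add S _ _) (β + a)
  map_smul' r u := funext fun β => by
    simp only [MvPowerSeries.coeff_smul]
    exact Set.indicator_const_smul_apply S r _ (β + a)

lemma coeff_monomialQuotient (S : Set (σ →₀ ℕ)) (a β : σ →₀ ℕ) (u : MvPowerSeries σ 𝕜) :
    MvPowerSeries.coeff β (monomialQuotient S a u) =
      S.indicator (fun γ => MvPowerSeries.coeff γ u) (β + a) := rfl

lemma coeff_monomialQuotient_mul_monomial {S : Set (σ →₀ ℕ)} {a : σ →₀ ℕ} (ha : ∀ γ ∈ S, a ≤ γ)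
    (γ : σ →₀ ℕ) (u : MvPowerSeries σ 𝕜) :
    MvPowerSeries.coeff γ (monomialQuotient S a u * MvPowerSeries.monomial a 1) =
      S.indicator (fun γ => MvPowerSeries.coeff γ u) γ := by
  classical
  rw [MvPowerSeries.coeff_mul_monomial, mul_one]
  split_ifs with h
  · rw [coeff_monomialQuotient, tsub_add_cancel_of_le h]
  · rw [Set.indicator_of_notMem fun hγ => h (ha γ hγ)]

lemma wnorm_monomialQuotient_mul_le (ρ : σ → ℝ≥0) (S : Set (σ →₀ ℕ)) (a : σ →₀ ℕ)
    (u : MvPowerSeries σ 𝕜) :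
    wnorm ρ (monomialQuotient S a u) * (multiPow ρ a : ℝ≥0) ≤
      ∑' γ, S.indicator (fun γ => ‖MvPowerSeries.coeff γ u‖ₑ * (multiPow ρ γ : ℝ≥0)) γ := by
  rw [wnorm, ← ENNReal.tsum_mul_right]
  refine le_trans (ENNReal.tsum_le_tsum fun β => ?_)
    (ENNReal.tsum_comp_le_tsum_of_injective (add_left_injective a) _)
  rw [coeff_monomialQuotient]
  by_cases hβ : β + a ∈ S
  · simp only [Set.indicator_of_mem hβ, multiPow_add, ENNReal.coe_mul, mul_assoc, le_refl]
  · simp only [Set.indicator_of_notMem hβ, enorm_zero, zero_mul, le_refl]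

lemma sum_indicator_fiber {ι κ M : Type*} [AddCommMonoid M] {S : Set ι} {A : Finset κ}
    {sel : ι → κ} (hsel : ∀ γ ∈ S, sel γ ∈ A) (f : ι → M) (γ : ι) :
    ∑ a ∈ A, {γ | γ ∈ S ∧ sel γ = a}.indicator f γ = S.indicator f γ := by
  classical
  by_cases hγ : γ ∈ S
  · simp [Set.indicator_apply, hγ, hsel γ hγ]
  · simp [hγ]

lemma exists_monomial_division (A : Finset (σ →₀ ℕ)) :
    ∃ Q : (σ →₀ ℕ) → Module.End 𝕜 (MvPowerSeries σ 𝕜),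
      (∀ ρ u, ∑ a ∈ A, wnorm ρ (Q a u) * (multiPow ρ a : ℝ≥0) ≤ wnorm ρ u) ∧
      ∀ u γ, MvPowerSeries.coeff γ (∑ a ∈ A, Q a u * MvPowerSeries.monomial a 1) =
        Set.indicator {γ | ∃ a ∈ A, a ≤ γ} (fun γ => MvPowerSeries.coeff γ u) γ := by
  classical
  have hsel (γ : σ →₀ ℕ) : ∃ a, (∃ b ∈ A, b ≤ γ) → a ∈ A ∧ a ≤ γ := by
    by_cases h : ∃ b ∈ A, b ≤ γ
    · exact h.imp fun _ ha _ => ha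
    · exact ⟨0, fun h' => absurd h' h⟩
  choose sel hsel using hsel
  let up : Set (σ →₀ ℕ) := {γ | ∃ a ∈ A, a ≤ γ}
  let S (a : σ →₀ ℕ) : Set (σ →₀ ℕ) := {γ | γ ∈ up ∧ sel γ = a}
  have hselA : ∀ γ ∈ up, sel γ ∈ A := fun γ hγ => (hsel γ hγ).1
  refine ⟨fun a => monomialQuotient (S a) a, fun ρ u => ?_, fun u γ => ?_⟩
  · refine (Finset.sum_le_sum fun a _ => wnorm_monomialQuotient_mul_le ρ (S a) a u).trans ?_
    rw [← Summable.tsum_finsetSum fun _ _ => ENNReal.summable]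
    refine ENNReal.tsum_le_tsum fun γ => ?_
    rw [sum_indicator_fiber hselA]
    exact Set.indicator_le_self _ _ γ
  · rw [map_sum, ← sum_indicator_fiber hselA]
    refine Finset.sum_congr rfl fun a _ => coeff_monomialQuotient_mul_monomial ?_ γ u
    rintro γ ⟨hγ, rfl⟩
    exact (hsel γ hγ).2

lemma ne_top_of_wnorm_mul_multiPow_le {ρ : σ → ℝ≥0} (hρ : ∀ i, 0 < ρ i) {A : Finset (σ →₀ ℕ)}
    {q : (σ →₀ ℕ) → MvPowerSeries σ 𝕜} {C : ℝ≥0∞} (hC : C ≠ ⊤)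
    (hq : ∑ a ∈ A, wnorm ρ (q a) * (multiPow ρ a : ℝ≥0) ≤ C) {a : σ →₀ ℕ} (ha : a ∈ A) :
    wnorm ρ (q a) ≠ ⊤ := by
  intro h
  have hle := (Finset.single_le_sum (f := fun a => wnorm ρ (q a) * (multiPow ρ a : ℝ≥0))
    (fun _ _ => zero_le) ha).trans hq
  simp only [h, ENNReal.top_mul (ENNReal.coe_ne_zero.2 (multiPow_pos hρ a).ne')] at hle
  exact hC (top_le_iff.1 hle)

lemma exists_grauert_division [CompleteSpace 𝕜] {ρ : σ → ℝ≥0} (hρ : ∀ i, 0 < ρ i)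
    {A : Finset (σ →₀ ℕ)} {f : (σ →₀ ℕ) → MvPowerSeries σ 𝕜}
    (hf : ∀ a ∈ A, wnorm ρ (f a - MvPowerSeries.monomial a 1) ≤ 2⁻¹ * (multiPow ρ a : ℝ≥0))
    {h : MvPowerSeries σ 𝕜} (hh : wnorm ρ h ≠ ⊤) :
    ∃ q : (σ →₀ ℕ) → MvPowerSeries σ 𝕜, (∀ a ∈ A, wnorm ρ (q a) ≠ ⊤) ∧
      ∀ γ, (∃ a ∈ A, a ≤ γ) → MvPowerSeries.coeff γ (h - ∑ a ∈ A, q a * f a) = 0 := by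
  obtain ⟨Q, hQ, hQx⟩ := exists_monomial_division (𝕜 := 𝕜) A
  let tail (a : σ →₀ ℕ) : MvPowerSeries σ 𝕜 := f a - MvPowerSeries.monomial a 1
  let T : Module.End 𝕜 (MvPowerSeries σ 𝕜) := ∑ a ∈ A, LinearMap.mulRight 𝕜 (tail a) ∘ₗ Q a
  have hTu (u : MvPowerSeries σ 𝕜) : T u = ∑ a ∈ A, Q a u * tail a := by
    simp [T, LinearMap.sum_apply]
  have hT (u : MvPowerSeries σ 𝕜) : wnorm ρ (T u) ≤ 2⁻¹ * wnorm ρ u :=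
    calc wnorm ρ (T u) ≤ ∑ a ∈ A, wnorm ρ (Q a u) * wnorm ρ (tail a) := by
          rw [hTu]
          exact (wnorm_sum_le _ _ _).trans (Finset.sum_le_sum fun a _ => wnorm_mul_le _ _ _)
      _ ≤ ∑ a ∈ A, wnorm ρ (Q a u) * (2⁻¹ * (multiPow ρ a : ℝ≥0)) := by
          refine Finset.sum_le_sum fun a ha => ?_
          gcongr
          exact hf a ha
      _ = 2⁻¹ * ∑ a ∈ A, wnorm ρ (Q a u) * (multiPow ρ a : ℝ≥0) := by
          rw [Finset.mul_sum]
          exact Finset.sum_congr rfl fun a _ => mul_left_comm _ _ _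
      _ ≤ 2⁻¹ * wnorm ρ u := by gcongr; exact hQ ρ u
  obtain ⟨u, hu, hu_fin⟩ := exists_add_apply_eq_of_wnorm_le hρ T ENNReal.one_half_lt_one hT hh
  refine ⟨fun a => Q a u, fun a ha => ne_top_of_wnorm_mul_multiPow_le hρ hu_fin (hQ ρ u) ha,
    fun γ hγ => ?_⟩
  have remainder : h - ∑ a ∈ A, Q a u * f a =
      u - ∑ a ∈ A, Q a u * MvPowerSeries.monomial a 1 := by
    rw [← hu, hTu, add_sub_assoc, sub_eq_add_neg u, ← Finset.sum_sub_distrib,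
      ← Finset.sum_neg_distrib]
    exact congrArg _ (Finset.sum_congr rfl fun a _ => by ring)
  rw [remainder, map_sub, hQx, Set.indicator_of_mem (s := {γ | ∃ a ∈ A, a ≤ γ}) hγ, sub_self]

/-- The polyradius `p ^ (-s)`. For distinct primes `pᵢ` the monomial `x ^ α` then has size
`(∏ pᵢ ^ αᵢ) ^ (-s)`, so that for large `s` the sizes are linearly ordered by the integers
`∏ pᵢ ^ αᵢ`, with arbitrarily large gaps. -/
def invPowRadius (p : σ → ℕ) (s : ℕ) (i : σ) : ℝ≥0 := ((p i : ℝ≥0)⁻¹) ^ s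

lemma multiPow_invPowRadius (p : σ → ℕ) (s : ℕ) (α : σ →₀ ℕ) :
    multiPow (invPowRadius p s) α = (((multiPow p α : ℕ) : ℝ≥0)⁻¹) ^ s := by
  simp only [multiPow, invPowRadius, Finsupp.prod, Nat.cast_prod, Nat.cast_pow,
    ← Finset.prod_inv_distrib, ← Finset.prod_pow, ← inv_pow, ← pow_mul, mul_comm s]

variable {p : σ → ℕ}

lemma invPowRadius_pos (hp : ∀ i, 2 ≤ p i) (s : ℕ) (i : σ) : 0 < invPowRadius p s i :=
  pow_pos (inv_pos.2 (Nat.cast_pos.2 (zero_lt_two.trans_le (hp i)))) s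

lemma eventually_wnorm_invPowRadius_ne_top [Finite σ] (hp : ∀ i, 2 ≤ p i)
    {c : MvPowerSeries σ 𝕜} (hc : c ∈ convergent σ 𝕜) :
    ∀ᶠ s in atTop, wnorm (invPowRadius p s) c ≠ ⊤ := by
  obtain ⟨ρ, hρ, hcρ⟩ := hc
  have hle (i : σ) : ∀ᶠ s in atTop, invPowRadius p s i ≤ ρ i := by
    have hlt : ((p i : ℝ≥0)⁻¹) < 1 :=
      inv_lt_one_of_one_lt₀ (Nat.one_lt_cast.2 (one_lt_two.trans_le (hp i)))
    exact (tendsto_pow_atTop_nhds_zero_of_lt_one zero_le hlt).eventually (Iic_mem_nhds (hρ i))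
  filter_upwards [eventually_all.2 hle] with s hs
  exact ne_top_of_le_ne_top hcρ (wnorm_mono hs c)

lemma wnorm_invPowRadius_add_le {K : ℕ} (hK : 0 < K) {c : MvPowerSeries σ 𝕜}
    (hcK : ∀ α, MvPowerSeries.coeff α c ≠ 0 → K ≤ multiPow p α) (s t : ℕ) :
    wnorm (invPowRadius p (s + t)) c ≤
      wnorm (invPowRadius p s) c * (((K : ℝ≥0)⁻¹ ^ t : ℝ≥0) : ℝ≥0∞) := by
  rw [wnorm, wnorm, ← ENNReal.tsum_mul_right]
  refine ENNReal.tsum_le_tsum fun α => ?_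
  rw [mul_assoc, multiPow_invPowRadius, multiPow_invPowRadius, pow_add, ← ENNReal.coe_mul]
  by_cases h0 : MvPowerSeries.coeff α c = 0
  · simp [h0]
  · gcongr
    exact_mod_cast hcK α h0

lemma eventually_wnorm_invPowRadius_le [Finite σ] (hp : ∀ i, 2 ≤ p i)
    {c : MvPowerSeries σ 𝕜} (hc : c ∈ convergent σ 𝕜) {K : ℕ} (hK : 0 < K)
    (hcK : ∀ α, MvPowerSeries.coeff α c ≠ 0 → K < multiPow p α) {ε : ℝ≥0} (hε : 0 < ε) :
    ∀ᶠ s in atTop, wnorm (invPowRadius p s) c ≤ ((ε * (K : ℝ≥0)⁻¹ ^ s : ℝ≥0) : ℝ≥0∞) := by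
  obtain ⟨s, hs⟩ := (eventually_wnorm_invPowRadius_ne_top hp hc).exists
  lift wnorm (invPowRadius p s) c to ℝ≥0 using hs with B hB
  have : (K : ℝ≥0) ≠ 0 := Nat.cast_ne_zero.2 hK.ne'
  have hlt : (K : ℝ≥0) * ((K + 1 : ℕ) : ℝ≥0)⁻¹ < 1 := by
    rw [← div_eq_mul_inv, div_lt_one (by positivity)]
    exact_mod_cast K.lt_succ_self
  have hlim := (tendsto_pow_atTop_nhds_zero_of_lt_one zero_le hlt).const_mul (B * (K : ℝ≥0) ^ s)
  rw [mul_zero] at hlim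
  obtain ⟨t₀, ht₀⟩ := eventually_atTop.1 (hlim.eventually (Iic_mem_nhds hε))
  filter_upwards [eventually_ge_atTop (s + t₀)] with r hr
  obtain ⟨t, rfl⟩ := Nat.exists_eq_add_of_le (le_of_add_le_left hr)
  refine (wnorm_invPowRadius_add_le K.succ_pos hcK s t).trans ?_
  rw [← hB, ← ENNReal.coe_mul, ENNReal.coe_le_coe]
  calc B * ((K + 1 : ℕ) : ℝ≥0)⁻¹ ^ t
      = B * (K : ℝ≥0) ^ s * ((K : ℝ≥0) * ((K + 1 : ℕ) : ℝ≥0)⁻¹) ^ t * (K : ℝ≥0)⁻¹ ^ (s + t) := by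
        simp only [mul_pow, pow_add, inv_pow]
        field_simp
    _ ≤ ε * (K : ℝ≥0)⁻¹ ^ (s + t) := by
        gcongr
        exact ht₀ t (by omega)

lemma multiPow_injective_of_prime (hp : ∀ i, (p i).Prime) (hinj : Function.Injective p) :
    Function.Injective (multiPow p) := by
  have factorization_multiPow (γ : σ →₀ ℕ) (i : σ) : (multiPow p γ).factorization (p i) = γ i := by
    rw [multiPow, Finsupp.prod,
      Nat.factorization_prod fun j _ => pow_ne_zero _ (hp j).ne_zero, Finsupp.finsetSum_apply]
    have hpow (j : σ) : (p j ^ γ j).factorization = Finsupp.single (p j) (γ j) :=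
      (hp j).factorization_pow
    rw [Finset.sum_eq_single i, hpow, Finsupp.single_eq_same]
    · intro j _ hj
      rw [hpow, Finsupp.single_eq_of_ne' (hinj.ne hj)]
    · intro hi
      rw [hpow, Finsupp.single_eq_same, Finsupp.notMem_support_iff.1 hi]
  intro α β h
  ext i
  rw [← factorization_multiPow α, h, factorization_multiPow β]

lemma exists_finset_forall_exists_le [Finite σ] (S : Set (σ →₀ ℕ)) :
    ∃ A : Finset (σ →₀ ℕ), (∀ a ∈ A, a ∈ S) ∧ ∀ γ ∈ S, ∃ a ∈ A, a ≤ γ := by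
  have hfin : {x | Minimal (· ∈ S) x}.Finite :=
    WellQuasiOrderedLE.finite_of_isAntichain (setOfPred_minimal_antichain _)
  refine ⟨hfin.toFinset, fun a ha => (hfin.mem_toFinset.1 ha).1, fun γ hγ => ?_⟩
  obtain ⟨a, hle, ha⟩ := exists_minimal_le_of_wellFoundedLT (· ∈ S) γ hγ
  exact ⟨a, hfin.mem_toFinset.2 ha, hle⟩

/-- `x ^ α` is the leading monomial of `c`, with coefficient `1`, when exponents are ordered by
`N`. -/
def HasMonicLeadingExponent (N : (σ →₀ ℕ) → ℕ) (c : MvPowerSeries σ 𝕜) (α : σ →₀ ℕ) : Prop :=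
  MvPowerSeries.coeff α c = 1 ∧ ∀ β, MvPowerSeries.coeff β c ≠ 0 → β ≠ α → N α < N β

lemma exists_hasMonicLeadingExponent {N : (σ →₀ ℕ) → ℕ} (hN : Function.Injective N)
    {c : MvPowerSeries σ 𝕜} (hc : c ≠ 0) :
    ∃ α, MvPowerSeries.coeff α c ≠ 0 ∧
      HasMonicLeadingExponent N ((MvPowerSeries.coeff α c)⁻¹ • c) α := by
  have hne : ∃ α, MvPowerSeries.coeff α c ≠ 0 := by
    contrapose! hc
    exact MvPowerSeries.ext hc
  obtain ⟨α, hα, hmin⟩ := WellFounded.has_min (measure N).wf {α | MvPowerSeries.coeff α c ≠ 0} hne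
  refine ⟨α, hα, by simp [inv_mul_cancel₀ hα], fun β hβ hβα => ?_⟩
  have hβc : MvPowerSeries.coeff β c ≠ 0 := fun h => hβ (by simp [h])
  exact (not_lt.1 (hmin β hβc)).lt_of_ne fun h => hβα (hN h.symm)

lemma HasMonicLeadingExponent.lt_of_coeff_sub_ne_zero {N : (σ →₀ ℕ) → ℕ}
    {c : MvPowerSeries σ 𝕜} {α β : σ →₀ ℕ} (h : HasMonicLeadingExponent N c α)
    (hβ : MvPowerSeries.coeff β (c - MvPowerSeries.monomial α 1) ≠ 0) : N α < N β := by
  classical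
  by_cases hβα : β = α
  · exact absurd (by simp [hβα, h.1]) hβ
  · refine h.2 β ?_ hβα
    simpa [MvPowerSeries.coeff_monomial, hβα] using hβ

lemma exists_prime_family (σ : Type*) [Countable σ] :
    ∃ p : σ → ℕ, (∀ i, (p i).Prime) ∧ Function.Injective p := by
  obtain ⟨e, he⟩ := exists_injective_nat σ
  exact ⟨fun i => Nat.nth Nat.Prime (e i), fun i => Nat.prime_nth_prime _,
    (Nat.nth_injective Nat.infinite_setOfPred_prime).comp he⟩

lemma exists_convergent_division [Finite σ] [CompleteSpace 𝕜] (hp : ∀ i, 2 ≤ p i)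
    {A : Finset (σ →₀ ℕ)} {f : (σ →₀ ℕ) → convergent σ 𝕜}
    (hf : ∀ a ∈ A, HasMonicLeadingExponent (multiPow p) (f a).1 a) (h : convergent σ 𝕜) :
    ∃ q : (σ →₀ ℕ) → convergent σ 𝕜,
      ∀ γ, (∃ a ∈ A, a ≤ γ) → MvPowerSeries.coeff γ (h - ∑ a ∈ A, q a * f a).1 = 0 := by
  classical
  have hradius : ∀ᶠ s in atTop, wnorm (invPowRadius p s) h.1 ≠ ⊤ ∧
      ∀ a ∈ A, wnorm (invPowRadius p s) ((f a).1 - MvPowerSeries.monomial a 1) ≤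
        2⁻¹ * (multiPow (invPowRadius p s) a : ℝ≥0) := by
    refine (eventually_wnorm_invPowRadius_ne_top hp h.2).and (A.eventually_all.2 fun a ha => ?_)
    have hpos : 0 < multiPow p a :=
      (multiPow_ne_zero (fun i => (zero_lt_two.trans_le (hp i)).ne') a).bot_lt
    filter_upwards [eventually_wnorm_invPowRadius_le hp
      (sub_mem (f a).2 (monomial_mem_convergent a 1)) hpos
      (fun β hβ => (hf a ha).lt_of_coeff_sub_ne_zero hβ) (ε := 2⁻¹) (by positivity)] with s hs
    rw [multiPow_invPowRadius]
    simpa using hs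
  obtain ⟨s, hsh, hsf⟩ := hradius.exists
  have hρ := invPowRadius_pos hp s
  obtain ⟨q, hq, hrem⟩ := exists_grauert_division hρ hsf hsh
  refine ⟨fun a => if ha : a ∈ A then ⟨q a, _, hρ, hq a ha⟩ else 0, fun γ hγ => ?_⟩
  rw [← hrem γ hγ]
  congr 1
  simp only [AddSubgroupClass.coe_sub, AddSubmonoidClass.coe_finsetSum, MulMemClass.coe_mul]
  exact congrArg _ (Finset.sum_congr rfl fun a ha => by rw [dif_pos ha])

/- Dividing `h ∈ I` by elements of `I` whose leading exponents generate all leading exponents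
of `I` leaves a remainder in `I` that has no leading exponent, hence vanishes. -/
instance convergent.isNoetherianRing [Finite σ] [CompleteSpace 𝕜] :
    IsNoetherianRing (convergent σ 𝕜) := by
  classical
  rw [isNoetherianRing_iff_ideal_fg]
  intro I
  obtain ⟨p, hp, hinj⟩ := exists_prime_family σ
  let lead (c : convergent σ 𝕜) (α : σ →₀ ℕ) : Prop := HasMonicLeadingExponent (multiPow p) c.1 α
  obtain ⟨A, hA, hAmin⟩ := exists_finset_forall_exists_le {α | ∃ c ∈ I, lead c α}
  choose! f hfI hf using hA
  refine ⟨A.image f, le_antisymm (Ideal.span_le.2 ?_) fun h hh => ?_⟩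
  · simpa [Set.subset_def] using hfI
  obtain ⟨q, hrem⟩ := exists_convergent_division (fun i => (hp i).two_le) hf h
  have hr : h - ∑ a ∈ A, q a * f a ∈ I :=
    sub_mem hh (sum_mem fun a ha => I.mul_mem_left _ (hfI a ha))
  suffices hr0 : h - ∑ a ∈ A, q a * f a = 0 by
    rw [sub_eq_zero.1 hr0]
    exact sum_mem fun a ha => Ideal.mul_mem_left _ _
      (Ideal.subset_span (Finset.mem_coe.2 (Finset.mem_image_of_mem f ha)))
  by_contra hne
  obtain ⟨α, hα, hlead⟩ := exists_hasMonicLeadingExponent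
    (multiPow_injective_of_prime hp hinj) fun h0 => hne (Subtype.ext h0)
  exact hα (hrem α (hAmin α ⟨_, Submodule.smul_of_tower_mem I
    (MvPowerSeries.coeff α (h - ∑ a ∈ A, q a * f a).1)⁻¹ hr, hlead⟩))

end GrauertDivision

section Evaluation

variable {σ 𝕜 : Type*}

lemma nnnorm_multiPow_le [NormedField 𝕜] {x : σ → 𝕜} {ρ : σ → ℝ≥0} (hx : ∀ i, ‖x i‖₊ ≤ ρ i)
    (α : σ →₀ ℕ) : ‖multiPow x α‖₊ ≤ multiPow ρ α := by
  rw [multiPow, Finsupp.prod, nnnorm_prod]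
  exact Finset.prod_le_prod' fun i _ => (nnnorm_pow _ _).trans_le (pow_le_pow_left' (hx i) _)

lemma multiPow_sum_single {M : Type*} [CommMonoid M] (x : σ → M) {k : ℕ} (s : Fin k → σ) :
    multiPow x (∑ j, Finsupp.single (s j) 1) = ∏ j, x (s j) := by
  induction (Finset.univ : Finset (Fin k)) using Finset.cons_induction with
  | empty => simp
  | cons j t hj ih => rw [Finset.sum_cons, Finset.prod_cons, multiPow_add, ih, multiPow_single,
      pow_one]

lemma exists_sum_single_eq {k : ℕ} {α : σ →₀ ℕ} (hα : α.degree = k) :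
    ∃ s : Fin k → σ, ∑ j, Finsupp.single (s j) 1 = α := by
  classical
  have hlen : (Finsupp.toMultiset α).toList.length = k := by
    rw [Multiset.length_toList, Finsupp.card_toMultiset, ← hα]
    rfl
  subst hlen
  refine ⟨(Finsupp.toMultiset α).toList.get, (Multiset.toFinsupp (α := σ)).symm.injective ?_⟩
  change Finsupp.toMultiset _ = Finsupp.toMultiset _
  simp only [map_sum, Finsupp.toMultiset_single, one_smul]
  rw [← List.sum_ofFn]
  simp only [List.get_eq_getElem]
  rw [List.ofFn_getElem_eq_map _ fun i => ({i} : Multiset σ), ← Multiset.sum_coe,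
    ← Multiset.map_coe, Multiset.coe_toList, Multiset.sum_map_singleton]

/-- The sum of a power series at a point; it has the junk value `0` where the series does not
converge. -/
def evalSeries [NormedField 𝕜] (c : MvPowerSeries σ 𝕜) (x : σ → 𝕜) : 𝕜 :=
  ∑' α, MvPowerSeries.coeff α c * multiPow x α

@[simp] lemma evalSeries_monomial [NormedField 𝕜] (α : σ →₀ ℕ) (a : 𝕜) (x : σ → 𝕜) :
    evalSeries (MvPowerSeries.monomial α a) x = a * multiPow x α := by
  classical
  rw [evalSeries, tsum_eq_single α fun β hβ => by simp [MvPowerSeries.coeff_monomial, hβ],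
    MvPowerSeries.coeff_monomial_same]

lemma exists_const_pos_le {α : Type*} [LinearOrder α] [Zero α] [One α] [ZeroLEOneClass α]
    [NeZero (1 : α)] [Finite σ] {ρ : σ → α} (hρ : ∀ i, 0 < ρ i) :
    ∃ r : α, 0 < r ∧ ∀ i, r ≤ ρ i := by
  cases isEmpty_or_nonempty σ
  · exact ⟨1, one_pos, isEmptyElim⟩
  · obtain ⟨i, hi⟩ := Finite.exists_min ρ
    exact ⟨ρ i, hρ i, hi⟩

lemma eventually_forall_nnnorm_le [NormedField 𝕜] [Finite σ] {ρ : σ → ℝ≥0} (hρ : ∀ i, 0 < ρ i) :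
    ∀ᶠ x in 𝓝 (0 : σ → 𝕜), ∀ i, ‖x i‖₊ ≤ ρ i := by
  refine eventually_all.2 fun i => ?_
  have hlim : Tendsto (fun x : σ → 𝕜 => ‖x i‖₊) (𝓝 0) (𝓝 0) := by
    simpa using (continuous_apply (A := fun _ : σ => 𝕜) i).nnnorm.tendsto 0
  exact hlim.eventually (Iic_mem_nhds (hρ i))

lemma evalSeries_algebraMap [NormedField 𝕜] (a : 𝕜) (x : σ → 𝕜) :
    evalSeries (algebraMap 𝕜 (MvPowerSeries σ 𝕜) a) x = a := by
  rw [MvPowerSeries.algebraMap_apply, ← MvPowerSeries.monomial_zero_eq_C_apply,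
    evalSeries_monomial, multiPow_zero, mul_one, Algebra.algebraMap_self_apply]

lemma exists_common_polydisc [NormedField 𝕜] {c d : MvPowerSeries σ 𝕜}
    (hc : c ∈ convergent σ 𝕜) (hd : d ∈ convergent σ 𝕜) :
    ∃ ρ : σ → ℝ≥0, (∀ i, 0 < ρ i) ∧ wnorm ρ c ≠ ⊤ ∧ wnorm ρ d ≠ ⊤ := by
  obtain ⟨ρ, hρ, hc⟩ := hc
  obtain ⟨ρ', hρ', hd⟩ := hd
  exact ⟨ρ ⊓ ρ', fun i => lt_min (hρ i) (hρ' i),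
    ne_top_of_le_ne_top hc (wnorm_mono (fun _ => min_le_left _ _) c),
    ne_top_of_le_ne_top hd (wnorm_mono (fun _ => min_le_right _ _) d)⟩

section Complete

variable [NormedField 𝕜] {x : σ → 𝕜} {ρ : σ → ℝ≥0} {c d : MvPowerSeries σ 𝕜}

lemma tsum_enorm_coeff_mul_multiPow_le (hx : ∀ i, ‖x i‖₊ ≤ ρ i) (c : MvPowerSeries σ 𝕜) :
    ∑' α, ‖MvPowerSeries.coeff α c * multiPow x α‖ₑ ≤ wnorm ρ c :=
  ENNReal.tsum_le_tsum fun α => by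
    rw [enorm_mul]
    gcongr
    exact ENNReal.coe_le_coe.2 (nnnorm_multiPow_le hx α)

lemma summable_norm_coeff_mul_multiPow (hx : ∀ i, ‖x i‖₊ ≤ ρ i) (hc : wnorm ρ c ≠ ⊤) :
    Summable fun α => ‖MvPowerSeries.coeff α c * multiPow x α‖ := by
  refine Summable.of_enorm ?_
  simpa only [enorm_norm] using
    ne_top_of_le_ne_top hc (tsum_enorm_coeff_mul_multiPow_le hx c)

variable [CompleteSpace 𝕜]

lemma hasSum_evalSeries (hx : ∀ i, ‖x i‖₊ ≤ ρ i) (hc : wnorm ρ c ≠ ⊤) :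
    HasSum (fun α => MvPowerSeries.coeff α c * multiPow x α) (evalSeries c x) :=
  (summable_norm_coeff_mul_multiPow hx hc).of_norm.hasSum

lemma hasSum_evalSeries_of_hasSum_coeff (hx : ∀ i, ‖x i‖₊ ≤ ρ i) {ι : Type*}
    {v : ι → MvPowerSeries σ 𝕜} (hv : ∑' k, wnorm ρ (v k) ≠ ⊤)
    (hc : ∀ α, HasSum (fun k => MvPowerSeries.coeff α (v k)) (MvPowerSeries.coeff α c)) :
    HasSum (fun k => evalSeries (v k) x) (evalSeries c x) := by
  have hsum : Summable fun p : ι × (σ →₀ ℕ) =>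
      MvPowerSeries.coeff p.2 (v p.1) * multiPow x p.2 := by
    refine Summable.of_enorm (ne_top_of_le_ne_top hv ?_)
    rw [ENNReal.tsum_prod']
    exact ENNReal.tsum_le_tsum fun k => tsum_enorm_coeff_mul_multiPow_le hx (v k)
  have hrow := hsum.hasSum.prod_fiberwise fun k =>
    hasSum_evalSeries hx (ENNReal.ne_top_of_tsum_ne_top hv k)
  have hcol := ((Equiv.prodComm _ _).hasSum_iff.2 hsum.hasSum).prod_fiberwise fun α =>
    (hc α).mul_right (multiPow x α)
  rwa [← hcol.tsum_eq] at hrow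

lemma evalSeries_add (hx : ∀ i, ‖x i‖₊ ≤ ρ i) (hc : wnorm ρ c ≠ ⊤) (hd : wnorm ρ d ≠ ⊤) :
    evalSeries (c + d) x = evalSeries c x + evalSeries d x := by
  rw [← ((hasSum_evalSeries hx hc).add (hasSum_evalSeries hx hd)).tsum_eq]
  exact tsum_congr fun α => by rw [map_add, add_mul]

lemma tsum_mul_tsum_eq_tsum_sum_antidiagonal {A R : Type*} [AddCommMonoid A]
    [Finset.HasAntidiagonal A] [NormedRing R] [CompleteSpace R] {f g : A → R}
    (hf : Summable fun a => ‖f a‖) (hg : Summable fun a => ‖g a‖) :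
    (∑' a, f a) * ∑' a, g a =
      ∑' a, ∑ p ∈ Finset.HasAntidiagonal.antidiagonal a, f p.1 * g p.2 :=
  hf.of_norm.tsum_mul_tsum_eq_tsum_sum_antidiagonal hg.of_norm
    (summable_mul_of_summable_norm hf hg)

lemma evalSeries_mul (hx : ∀ i, ‖x i‖₊ ≤ ρ i) (hc : wnorm ρ c ≠ ⊤) (hd : wnorm ρ d ≠ ⊤) :
    evalSeries (c * d) x = evalSeries c x * evalSeries d x := by
  classical
  rw [evalSeries, evalSeries, evalSeries, tsum_mul_tsum_eq_tsum_sum_antidiagonal (R := 𝕜)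
    (summable_norm_coeff_mul_multiPow hx hc) (summable_norm_coeff_mul_multiPow hx hd)]
  refine tsum_congr fun β => ?_
  rw [MvPowerSeries.coeff_mul, Finset.sum_mul]
  refine Finset.sum_congr rfl fun p hp => ?_
  rw [← Finset.HasAntidiagonal.mem_antidiagonal.1 hp, multiPow_add]
  ring

end Complete

section Analytic

variable [NontriviallyNormedField 𝕜] [Fintype σ]

lemma exists_multilinear_eq_multiPow {k : ℕ} {α : σ →₀ ℕ} (hα : α.degree = k) :
    ∃ M : ContinuousMultilinearMap 𝕜 (fun _ : Fin k => σ → 𝕜) 𝕜,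
      ‖M‖ ≤ 1 ∧ ∀ x, M (fun _ => x) = multiPow x α := by
  obtain ⟨s, rfl⟩ := exists_sum_single_eq hα
  refine ⟨(ContinuousMultilinearMap.mkPiAlgebra 𝕜 (Fin k) 𝕜).compContinuousLinearMap
    fun j => ContinuousLinearMap.proj (s j), ?_, fun x => ?_⟩
  · refine ContinuousMultilinearMap.opNorm_le_bound zero_le_one fun v => ?_
    simp only [ContinuousMultilinearMap.compContinuousLinearMap_apply,
      ContinuousMultilinearMap.mkPiAlgebra_apply, ContinuousLinearMap.proj_apply, norm_prod,
      one_mul]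
    exact Finset.prod_le_prod (fun _ _ => norm_nonneg _) fun j _ => norm_le_pi_norm (v j) (s j)
  · simp [multiPow_sum_single]

lemma exists_multilinear_eq_sum_of_degree_eq (c : MvPowerSeries σ 𝕜) (k : ℕ) :
    ∃ P : ContinuousMultilinearMap 𝕜 (fun _ : Fin k => σ → 𝕜) 𝕜,
      (∀ r : ℝ≥0, ‖P‖ * (r : ℝ) ^ k ≤
        ∑' α : {α : σ →₀ ℕ // α.degree = k}, ‖MvPowerSeries.coeff α.1 c‖ * (r : ℝ) ^ α.1.degree) ∧
      ∀ x, HasSum (fun α : {α : σ →₀ ℕ // α.degree = k} =>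
        MvPowerSeries.coeff α.1 c * multiPow x α.1) (P fun _ => x) := by
  choose M hM hM_apply using fun α : {α : σ →₀ ℕ // α.degree = k} =>
    exists_multilinear_eq_multiPow (𝕜 := 𝕜) α.2
  have : Fintype {α : σ →₀ ℕ // α.degree = k} := (Finsupp.finite_of_degree_eq k).fintype
  refine ⟨∑ α, MvPowerSeries.coeff α.1 c • M α, fun r => ?_, fun x => ?_⟩
  · rw [tsum_fintype]
    refine (mul_le_mul_of_nonneg_right (norm_sum_le _ _) (by positivity)).trans ?_
    rw [Finset.sum_mul]
    refine Finset.sum_le_sum fun α _ => ?_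
    rw [α.2, norm_smul]
    gcongr
    exact mul_le_of_le_one_right (norm_nonneg _) (hM α)
  · simp only [sum_apply, smul_apply, hM_apply, smul_eq_mul]
    exact hasSum_fintype _

lemma hasSum_apply_single [DecidableEq σ] {p : FormalMultilinearSeries 𝕜 (σ → 𝕜) 𝕜} (k : ℕ)
    (x : σ → 𝕜) :
    HasSum (fun s : Fin k → σ => (p k fun j => Pi.single (s j) 1) * ∏ j, x (s j))
      (p k fun _ => x) := by
  have hx : x = ∑ i, x i • (Pi.single i (1 : 𝕜) : σ → 𝕜) := by
    simpa only [smul_eq_mul, mul_one, ← Pi.single_smul] using (Finset.univ_sum_single x).symm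
  have happ : (p k fun _ => x) =
      ∑ s : Fin k → σ, (p k fun j => Pi.single (s j) 1) * ∏ j, x (s j) := by
    conv_lhs => rw [hx]
    rw [ContinuousMultilinearMap.map_sum]
    exact Finset.sum_congr rfl fun s _ => by
      rw [ContinuousMultilinearMap.map_smul_univ, smul_eq_mul, mul_comm]
  rw [happ]
  exact hasSum_fintype _

lemma exists_summable_taylor_coeff [DecidableEq σ]
    {p : FormalMultilinearSeries 𝕜 (σ → 𝕜) 𝕜} (hp : 0 < p.radius) :
    ∃ r : ℝ≥0, 0 < r ∧ ∑' y : Σ k : ℕ, Fin k → σ,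
      ‖p y.1 fun j => Pi.single (y.2 j) 1‖ₑ * (r : ℝ≥0∞) ^ y.1 ≠ ⊤ := by
  obtain ⟨R, hR, hRp⟩ := ENNReal.lt_iff_exists_nnreal_btwn.1 hp
  have hN : (0 : ℝ≥0) < Fintype.card σ + 1 := by positivity
  refine ⟨R / (Fintype.card σ + 1), div_pos (ENNReal.coe_pos.1 hR) hN, ?_⟩
  set r : ℝ≥0 := R / (Fintype.card σ + 1)
  have hp_sum : ∑' k, ‖p k‖ₑ * (R : ℝ≥0∞) ^ k ≠ ⊤ :=
    ENNReal.tsum_coe_ne_top_iff_summable.2 (p.summable_nnnorm_mul_pow hRp)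
  refine ne_top_of_le_ne_top hp_sum ?_
  rw [ENNReal.tsum_sigma']
  refine ENNReal.tsum_le_tsum fun k => ?_
  have coeff_le (s : Fin k → σ) : ‖p k fun j => Pi.single (s j) 1‖ₑ ≤ ‖p k‖ₑ := by
    refine enorm_le_iff_norm_le.2 ((ContinuousMultilinearMap.le_opNorm _ _).trans
      (mul_le_of_le_one_right (norm_nonneg _) (Finset.prod_le_one (fun _ _ => norm_nonneg _) ?_)))
    intro j _
    rw [Pi.norm_single, norm_one]
  calc ∑' s : Fin k → σ, ‖p k fun j => Pi.single (s j) 1‖ₑ * (r : ℝ≥0∞) ^ k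
      ≤ ∑' _ : Fin k → σ, ‖p k‖ₑ * (r : ℝ≥0∞) ^ k :=
        ENNReal.tsum_le_tsum fun s => by gcongr; exact coeff_le s
    _ = ‖p k‖ₑ * ((Fintype.card σ * r : ℝ≥0) : ℝ≥0∞) ^ k := by
        rw [tsum_fintype, Finset.sum_const, nsmul_eq_mul, Finset.card_univ, Fintype.card_pi]
        push_cast [Finset.prod_const, Finset.card_univ, Fintype.card_fin]
        ring
    _ ≤ ‖p k‖ₑ * (R : ℝ≥0∞) ^ k := by
        gcongr
        rw [← mul_div_cancel₀ R hN.ne']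
        gcongr
        exact le_add_of_nonneg_right zero_le_one

variable [CompleteSpace 𝕜]

lemma analyticAt_evalSeries {c : MvPowerSeries σ 𝕜} (hc : c ∈ convergent σ 𝕜) :
    AnalyticAt 𝕜 (evalSeries c) 0 := by
  obtain ⟨ρ, hρ, hcρ⟩ := hc
  obtain ⟨r, hr, hrρ⟩ := exists_const_pos_le hρ
  have hcr : wnorm (fun _ => r) c ≠ ⊤ := ne_top_of_le_ne_top hcρ (wnorm_mono hrρ c)
  choose p hp_le hp_sum using exists_multilinear_eq_sum_of_degree_eq c
  have radius_ge : (r : ℝ≥0∞) ≤ FormalMultilinearSeries.radius p := by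
    have hsum : Summable fun α : σ →₀ ℕ => ‖MvPowerSeries.coeff α c‖ * (r : ℝ) ^ α.degree := by
      refine (NNReal.summable_coe.2 (ENNReal.tsum_coe_ne_top_iff_summable.1 hcr)).congr fun α => ?_
      rw [multiPow_const, NNReal.coe_mul, coe_nnnorm, NNReal.coe_pow]
    exact FormalMultilinearSeries.le_radius_of_summable _ (Summable.of_nonneg_of_le
      (fun k => by positivity) (fun k => hp_le k r)
      ((Equiv.sigmaFiberEquiv Finsupp.degree).summable_iff.2 hsum).sigma)
  suffices h : HasFPowerSeriesOnBall (evalSeries c) p 0 r from h.analyticAt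
  refine ⟨radius_ge, ENNReal.coe_pos.2 hr, fun {y} hy => ?_⟩
  have hy_le (i : σ) : ‖y i‖₊ ≤ r := by
    have hy_lt : ‖y‖₊ < r := by simpa [Metric.eball, edist_zero_right, enorm] using hy
    exact (nnnorm_le_pi_nnnorm y i).trans hy_lt.le
  rw [zero_add]
  exact ((Equiv.sigmaFiberEquiv Finsupp.degree).hasSum_iff.2
    (hasSum_evalSeries hy_le hcr)).sigma fun k => hp_sum k y

lemma exists_convergent_evalSeries_eq {f : (σ → 𝕜) → 𝕜} (hf : AnalyticAt 𝕜 f 0) :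
    ∃ c ∈ convergent σ 𝕜, ∀ᶠ x in 𝓝 0, evalSeries c x = f x := by
  classical
  obtain ⟨p, R, hp⟩ := hf
  obtain ⟨r, hr, hsum⟩ := exists_summable_taylor_coeff (hp.r_pos.trans_le hp.r_le)
  let v (y : Σ k : ℕ, Fin k → σ) : MvPowerSeries σ 𝕜 :=
    MvPowerSeries.monomial (∑ j, Finsupp.single (y.2 j) 1) (p y.1 fun j => Pi.single (y.2 j) 1)
  have hv : ∑' y, wnorm (fun _ => r) (v y) ≠ ⊤ := by
    simpa only [v, wnorm_monomial, multiPow_sum_single, Finset.prod_const, Finset.card_univ,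
      Fintype.card_fin, ENNReal.coe_pow] using hsum
  obtain ⟨c, hc⟩ := exists_hasSum_coeff (fun _ => hr) hv
  have hcr : wnorm (fun _ => r) c ≠ ⊤ := ne_top_of_le_ne_top hv (wnorm_le_tsum_of_hasSum hc)
  refine ⟨c, ⟨_, fun _ => hr, hcr⟩, ?_⟩
  filter_upwards [Metric.eball_mem_nhds _ hp.r_pos,
    eventually_forall_nnnorm_le (ρ := fun _ => r) fun _ => hr] with x hxR hxr
  have heval := hasSum_evalSeries_of_hasSum_coeff hxr hv hc
  simp only [v, evalSeries_monomial, multiPow_sum_single] at heval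
  have hfx := hp.hasSum hxR
  rw [zero_add] at hfx
  exact (heval.sigma fun k => hasSum_apply_single k x).unique hfx

end Analytic

lemma mkOn_eq_mkOn {f g : (Fin n → ℂ) → ℂ} {hf : AnalyticAt ℂ f 0} {hg : AnalyticAt ℂ g 0}
    (h : f =ᶠ[𝓝 0] g) : mkOn f hf = mkOn g hg :=
  Subtype.ext (Filter.Germ.coe_eq.2 h)

lemma mkOn_rep (g : On n) : mkOn (On.rep g) (On.rep_analyticAt g) = g :=
  Subtype.ext (On.rep_spec g)

/-- The algebra homomorphism sending a convergent power series to the germ at `0` of its sum. -/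
def seriesGerm (n : ℕ) : convergent (Fin n) ℂ →ₐ[ℂ] On n where
  toFun c := mkOn (evalSeries c.1) (analyticAt_evalSeries c.2)
  map_add' c d := by
    obtain ⟨ρ, hρ, hc, hd⟩ := exists_common_polydisc c.2 d.2
    exact mkOn_eq_mkOn (f := evalSeries (c + d).1) (g := evalSeries c.1 + evalSeries d.1)
      (hg := (analyticAt_evalSeries c.2).add (analyticAt_evalSeries d.2))
      ((eventually_forall_nnnorm_le hρ).mono fun x hx => evalSeries_add hx hc hd)
  map_mul' c d := by
    obtain ⟨ρ, hρ, hc, hd⟩ := exists_common_polydisc c.2 d.2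
    exact mkOn_eq_mkOn (f := evalSeries (c * d).1) (g := evalSeries c.1 * evalSeries d.1)
      (hg := (analyticAt_evalSeries c.2).mul (analyticAt_evalSeries d.2))
      ((eventually_forall_nnnorm_le hρ).mono fun x hx => evalSeries_mul hx hc hd)
  map_zero' := mkOn_eq_mkOn (hg := analyticAt_const) (.of_forall fun x => by simp [evalSeries])
  map_one' := mkOn_eq_mkOn (hg := analyticAt_const) (.of_forall fun x => evalSeries_algebraMap 1 x)
  commutes' a :=
    mkOn_eq_mkOn (hg := analyticAt_const) (.of_forall fun x => evalSeries_algebraMap a x)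

lemma seriesGerm_surjective : Function.Surjective (seriesGerm n) := by
  intro g
  obtain ⟨c, hc, h⟩ := exists_convergent_evalSeries_eq (On.rep_analyticAt g)
  refine ⟨⟨c, hc⟩, .trans ?_ (mkOn_rep g)⟩
  exact mkOn_eq_mkOn (hf := analyticAt_evalSeries hc) h

lemma seriesGerm_X (i : Fin n) : seriesGerm n (convergentX i) = coordG i :=
  mkOn_eq_mkOn (hf := analyticAt_evalSeries (convergentX i).2) <| .of_forall fun x => by
    change evalSeries (MvPowerSeries.X i) x = x i
    rw [MvPowerSeries.X, evalSeries_monomial, multiPow_single, pow_one, one_mul]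

instance On.isNoetherianRing : IsNoetherianRing (On n) :=
  isNoetherianRing_of_surjective _ _ (seriesGerm n).toRingHom seriesGerm_surjective

end Evaluation

section Germs

namespace On

lemma rep_mkOn (f : (Fin n → ℂ) → ℂ) (hf : AnalyticAt ℂ f 0) : rep (mkOn f hf) =ᶠ[𝓝 0] f :=
  Filter.Germ.coe_eq.1 (rep_spec (mkOn f hf))

lemma eq_of_rep_eventuallyEq {a b : On n} (h : rep a =ᶠ[𝓝 0] rep b) : a = b := by
  rw [← mkOn_rep a, ← mkOn_rep b]
  exact mkOn_eq_mkOn h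

lemma rep_add (a b : On n) : rep (a + b) =ᶠ[𝓝 0] rep a + rep b :=
  Filter.Germ.coe_eq.1 (by simp [rep_spec])

lemma rep_mul (a b : On n) : rep (a * b) =ᶠ[𝓝 0] rep a * rep b :=
  Filter.Germ.coe_eq.1 (by simp [rep_spec])

lemma rep_algebraMap (c : ℂ) : rep (algebraMap ℂ (On n) c) =ᶠ[𝓝 0] fun _ => c :=
  Filter.Germ.coe_eq.1 (rep_spec _)

lemma eventually_differentiableAt_rep (a : On n) :
    ∀ᶠ x in 𝓝 (0 : Fin n → ℂ), DifferentiableAt ℂ (rep a) x :=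
  (rep_analyticAt a).eventually_analyticAt.mono fun _ h => h.differentiableAt

lemma restrictOn_eq_coe_rep {l : Filter (Fin n → ℂ)} (hl : l ≤ 𝓝 0) (g : On n) :
    restrictOn n hl g = (rep g : Filter.Germ l ℂ) := by
  change (g : Filter.Germ (𝓝 (0 : Fin n → ℂ)) ℂ).compTendsto id (Filter.tendsto_id'.2 hl) = _
  rw [← rep_spec g]
  rfl

/-- The value of a germ at the origin, as an algebra homomorphism with underlying map `ev0`. -/
def evalZero (n : ℕ) : On n →ₐ[ℂ] ℂ where
  toFun := ev0
  map_one' := by simpa only [map_one, ev0] using (rep_algebraMap (n := n) 1).self_of_nhds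
  map_zero' := by simpa only [map_zero, ev0] using (rep_algebraMap (n := n) 0).self_of_nhds
  map_mul' a b := (rep_mul a b).self_of_nhds
  map_add' a b := (rep_add a b).self_of_nhds
  commutes' c := (rep_algebraMap c).self_of_nhds

lemma evalZero_mkOn (f : (Fin n → ℂ) → ℂ) (hf : AnalyticAt ℂ f 0) :
    evalZero n (mkOn f hf) = f 0 :=
  (rep_mkOn f hf).self_of_nhds

lemma isUnit_iff_evalZero_ne_zero {g : On n} : IsUnit g ↔ evalZero n g ≠ 0 := by
  refine ⟨fun h => (h.map (evalZero n)).ne_zero, fun h => ?_⟩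
  have hinv : AnalyticAt ℂ (fun x => (rep g x)⁻¹) 0 := (rep_analyticAt g).fun_inv h
  refine .of_mul_eq_one (mkOn _ hinv) (eq_of_rep_eventuallyEq ?_)
  filter_upwards [rep_mul g (mkOn _ hinv), rep_mkOn _ hinv, rep_algebraMap (n := n) 1,
    (rep_analyticAt g).continuousAt.eventually_ne h] with x hmul hx hone hgx
  rw [map_one] at hone
  rw [hmul, hone, Pi.mul_apply, hx, mul_inv_cancel₀ hgx]

instance : Nontrivial (On n) := (evalZero n).toRingHom.domain_nontrivial

instance isLocalRing : IsLocalRing (On n) := by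
  refine IsLocalRing.of_nonunits_add fun a b ha hb => ?_
  rw [mem_nonunits_iff, isUnit_iff_evalZero_ne_zero, not_not] at *
  rw [map_add, ha, hb, add_zero]

end On

open On

lemma mem_mId {g : On n} : g ∈ mId n ↔ evalZero n g = 0 := by
  rw [mId, RingHom.mem_ker, restrictOn_eq_coe_rep]
  exact Filter.Germ.coe_eq.trans eventually_pure

lemma IX_le_mId {X : Set (Fin n → ℂ)} (h0 : (0 : Fin n → ℂ) ∈ closure X) : IX n X ≤ mId n := by
  intro g hg
  rw [IX, RingHom.mem_ker, restrictOn_eq_coe_rep] at hg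
  have hzero : rep g =ᶠ[𝓝[X] 0] 0 := Filter.Germ.coe_eq.1 hg
  have := mem_closure_iff_nhdsWithin_neBot.1 h0
  refine mem_mId.2 (tendsto_nhds_unique (f := rep g) (l := 𝓝[X] 0) ?_ ?_)
  · exact (rep_analyticAt g).continuousAt.tendsto.mono_left nhdsWithin_le_nhds
  · exact tendsto_const_nhds.congr' hzero.symm

lemma maximalIdeal_On : IsLocalRing.maximalIdeal (On n) = mId n := by
  ext g
  rw [IsLocalRing.mem_maximalIdeal, mem_nonunits_iff, isUnit_iff_evalZero_ne_zero, not_not, mem_mId]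

lemma sub_algebraMap_evalZero_mem (g : On n) : g - algebraMap ℂ (On n) (evalZero n g) ∈ mId n := by
  simp [mem_mId]

lemma coordG_mem_mId (i : Fin n) : coordG i ∈ mId n :=
  mem_mId.2 (evalZero_mkOn _ _)

lemma rep_pd_eventuallyEq {i : Fin n} {a : On n} {f : (Fin n → ℂ) → ℂ} (h : rep a =ᶠ[𝓝 0] f) :
    rep (pd i a) =ᶠ[𝓝 0] fun x => fderiv ℂ f x (Pi.single i 1) := by
  refine (rep_mkOn _ _).trans ?_
  filter_upwards [h.fderiv (𝕜 := ℂ)] with x hx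
  rw [hx]

lemma pd_add (i : Fin n) (a b : On n) : pd i (a + b) = pd i a + pd i b := by
  refine eq_of_rep_eventuallyEq ((rep_pd_eventuallyEq (rep_add a b)).trans ?_)
  filter_upwards [rep_add (pd i a) (pd i b), rep_pd_eventuallyEq (i := i) (.refl _ (rep a)),
    rep_pd_eventuallyEq (i := i) (.refl _ (rep b)), eventually_differentiableAt_rep a,
    eventually_differentiableAt_rep b] with x hadd ha hb hda hdb
  rw [hadd, fderiv_add hda hdb, Pi.add_apply, ha, hb, add_apply]

lemma pd_mul (i : Fin n) (a b : On n) : pd i (a * b) = a * pd i b + b * pd i a := by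
  refine eq_of_rep_eventuallyEq ((rep_pd_eventuallyEq (rep_mul a b)).trans ?_)
  filter_upwards [rep_add (a * pd i b) (b * pd i a), rep_mul a (pd i b), rep_mul b (pd i a),
    rep_pd_eventuallyEq (i := i) (.refl _ (rep a)), rep_pd_eventuallyEq (i := i) (.refl _ (rep b)),
    eventually_differentiableAt_rep a, eventually_differentiableAt_rep b]
    with x hadd hab hba ha hb hda hdb
  simp [hadd, hab, hba, ha, hb, fderiv_mul hda hdb]

lemma pd_algebraMap (i : Fin n) (c : ℂ) : pd i (algebraMap ℂ (On n) c) = 0 := by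
  refine eq_of_rep_eventuallyEq ((rep_pd_eventuallyEq (rep_algebraMap c)).trans ?_)
  filter_upwards [rep_algebraMap (n := n) 0] with x hx
  rw [map_zero] at hx
  simp [hx]

/-- The partial derivative `pd i` as a derivation of `𝒪ₙ`. -/
def pdDerivation (i : Fin n) : Derivation ℂ (On n) (On n) :=
  Derivation.mk' { toFun := pd i
                   map_add' := pd_add i
                   map_smul' := fun c a => by
                    simp [Algebra.smul_def, pd_mul, pd_algebraMap] } (pd_mul i)

lemma pd_coordG (i j : Fin n) : pd i (coordG j) = if i = j then 1 else 0 := by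
  rw [← map_one (algebraMap ℂ (On n)), ← map_zero (algebraMap ℂ (On n)), ← apply_ite]
  refine eq_of_rep_eventuallyEq ((rep_pd_eventuallyEq (rep_mkOn _ _)).trans ?_)
  filter_upwards [rep_algebraMap (n := n) (if i = j then 1 else 0)] with x hx
  rw [hx, (hasFDerivAt_apply j x).fderiv]
  simp [Pi.single_apply, eq_comm]

lemma sum_smul_derivation_apply {ι R A : Type*} [CommRing R] [CommRing A] [Algebra R A]
    (s : Finset ι) (g : ι → A) (D : ι → Derivation R A A) (a : A) :
    (∑ j ∈ s, g j • D j) a = ∑ j ∈ s, g j * D j a := by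
  rw [← Derivation.coeFnAddMonoidHom_apply, map_sum, Finset.sum_apply]
  rfl

/-- The vector field with components `δ` as a derivation of `𝒪ₙ`. -/
def vfDerivation (δ : Fin n → On n) : Derivation ℂ (On n) (On n) := ∑ i, δ i • pdDerivation i

lemma vfDerivation_apply (δ : Fin n → On n) (g : On n) : vfDerivation δ g = applyVF δ g :=
  sum_smul_derivation_apply _ _ _ g

lemma vfDerivation_coordG (δ : Fin n → On n) (j : Fin n) : vfDerivation δ (coordG j) = δ j := by
  simp [vfDerivation_apply, applyVF, pd_coordG]

end Germs

section Order

lemma multiPow_mem_pow {σ A : Type*} [CommRing A] {I : Ideal A} {y : σ → A}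
    (hy : ∀ i, y i ∈ I) (α : σ →₀ ℕ) : multiPow y α ∈ I ^ α.degree := by
  rw [multiPow, Finsupp.prod, Finsupp.degree_apply, ← Finset.prod_pow_eq_pow_sum]
  exact Ideal.prod_mem_prod fun i _ => Ideal.pow_mem_pow (hy i) _

variable {σ 𝕜 : Type*} [NormedField 𝕜]

lemma coe_multiPow_convergentX (α : σ →₀ ℕ) :
    (multiPow convergentX α : convergent σ 𝕜).1 = MvPowerSeries.monomial α 1 := by
  rw [MvPowerSeries.monomial_one_eq]
  exact map_multiPow (convergent σ 𝕜).val convergentX α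

lemma le_order_of_mem_span_convergentX_pow {M : ℕ} {c : convergent σ 𝕜}
    (hc : c ∈ Ideal.span (Set.range convergentX) ^ M) : M ≤ c.1.order := by
  classical
  induction M generalizing c with
  | zero => simp
  | succ M ih =>
    rw [pow_succ] at hc
    refine Submodule.mul_induction_on hc (fun a ha b hb => ?_) fun a b ha hb =>
      (le_min ha hb).trans MvPowerSeries.min_order_le_add
    refine le_trans ?_ MvPowerSeries.le_order_mul
    rw [Nat.cast_succ]
    refine add_le_add (ih ha) ?_
    induction hb using Submodule.span_induction with
    | mem b hb =>
      obtain ⟨i, rfl⟩ := hb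
      exact MvPowerSeries.nat_le_order fun d hd => by
        rw [convergentX, MvPowerSeries.coeff_X, if_neg (by rintro rfl; simp at hd)]
    | zero => simp
    | add b b' _ _ hb hb' => exact (le_min hb hb').trans MvPowerSeries.min_order_le_add
    | smul a b _ hb => exact (le_add_of_nonneg_of_le zero_le hb).trans MvPowerSeries.le_order_mul

lemma mem_span_convergentX_pow_iff [Finite σ] {M : ℕ} {c : convergent σ 𝕜} :
    c ∈ Ideal.span (Set.range convergentX) ^ M ↔ M ≤ c.1.order := by
  refine ⟨le_order_of_mem_span_convergentX_pow, fun hc => ?_⟩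
  let A : Finset (σ →₀ ℕ) := (Finsupp.finite_of_degree_eq M).toFinset
  have mem_A {a : σ →₀ ℕ} : a ∈ A ↔ a.degree = M := Set.Finite.mem_toFinset _
  obtain ⟨Q, hQ, hQsum⟩ := exists_monomial_division (𝕜 := 𝕜) A
  obtain ⟨ρ, hρ, hcρ⟩ := c.2
  let q (a : σ →₀ ℕ) (ha : a ∈ A) : convergent σ 𝕜 :=
    ⟨Q a c.1, ρ, hρ, ne_top_of_wnorm_mul_multiPow_le hρ hcρ (hQ ρ c.1) ha⟩
  have hc_eq : c = ∑ a : A, q a.1 a.2 * multiPow convergentX a.1 := by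
    ext γ
    simp only [AddSubmonoidClass.coe_finsetSum, MulMemClass.coe_mul, coe_multiPow_convergentX, q]
    rw [Finset.sum_coe_sort A fun a => Q a c.1 * MvPowerSeries.monomial a 1, hQsum]
    refine (Set.indicator_apply_eq_self (f := fun γ => MvPowerSeries.coeff γ c.1).2
      fun hγ => ?_).symm
    refine MvPowerSeries.coeff_of_lt_order (lt_of_lt_of_le ?_ hc)
    rw [Nat.cast_lt]
    by_contra! hM
    obtain ⟨a, haγ, ha⟩ := γ.exists_le_degree_eq M hM
    exact hγ ⟨a, mem_A.2 ha, haγ⟩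
  rw [hc_eq]
  refine sum_mem fun a _ => Ideal.mul_mem_left _ _ ?_
  rw [← mem_A.1 a.2]
  exact multiPow_mem_pow (fun i => Ideal.subset_span (Set.mem_range_self i)) _

lemma sub_algebraMap_mem_span_convergentX [Finite σ] (c : convergent σ 𝕜) :
    c - algebraMap 𝕜 _ c.1.constantCoeff ∈ Ideal.span (Set.range convergentX) := by
  rw [← pow_one (Ideal.span _), mem_span_convergentX_pow_iff, Nat.cast_one,
    MvPowerSeries.one_le_order_iff_constCoeff_eq_zero]
  simp [MvPowerSeries.algebraMap_apply]

end Order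

lemma mId_eq_span_coordG : mId n = Ideal.span (Set.range coordG) := by
  have span_le : Ideal.span (Set.range coordG) ≤ mId n :=
    Ideal.span_le.2 (Set.range_subset_iff.2 coordG_mem_mId)
  refine le_antisymm (fun g hg => ?_) span_le
  obtain ⟨c, rfl⟩ := seriesGerm_surjective g
  have hspan := Ideal.mem_map_of_mem (seriesGerm n) (sub_algebraMap_mem_span_convergentX c)
  rw [Ideal.map_span, ← Set.range_comp, show seriesGerm n ∘ convergentX = coordG from
    funext seriesGerm_X, map_sub, AlgHom.commutes] at hspan
  have hconst : c.1.constantCoeff = 0 := by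
    simpa [mem_mId.1 hg] using mem_mId.1 (span_le hspan)
  rwa [hconst, map_zero, sub_zero] at hspan

section Hausdorff

lemma mem_of_forall_mem_sup_maximalIdeal_pow {A : Type*} [CommRing A] [IsLocalRing A]
    [IsNoetherianRing A] {I : Ideal A} {a : A}
    (h : ∀ K, a ∈ I ⊔ IsLocalRing.maximalIdeal A ^ K) : a ∈ I := by
  have hausdorff : IsHausdorff (IsLocalRing.maximalIdeal A) (A ⧸ I) := inferInstance
  refine Ideal.Quotient.eq_zero_iff_mem.1 (hausdorff.haus _ fun K => SModEq.zero.2 ?_)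
  obtain ⟨b, hb, c, hc, rfl⟩ := Submodule.mem_sup.1 (h K)
  have hmk : Ideal.Quotient.mk I (b + c) = c • (1 : A ⧸ I) := by
    rw [map_add, Ideal.Quotient.eq_zero_iff_mem.2 hb, zero_add, Algebra.smul_def, mul_one]
    rfl
  rw [hmk]
  exact Submodule.smul_mem_smul hc trivial

variable {R A M : Type*} [CommRing R] [CommRing A] [Algebra R A] [AddCommGroup M] [Module R M]
  [Module A M]

lemma derivation_mem_pow_smul_top {s : Set A}
    (hA : ∀ a : A, ∃ r : R, a - algebraMap R A r ∈ Ideal.span s)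
    {D : Derivation R A M} (hD : ∀ x ∈ s, D x = 0) (K : ℕ) (a : A) :
    D a ∈ (Ideal.span s ^ K • ⊤ : Submodule A M) := by
  induction K generalizing a with
  | zero => simp
  | succ K ih =>
    obtain ⟨r, hr⟩ := hA a
    rw [← sub_add_cancel a (algebraMap R A r), map_add, D.map_algebraMap, add_zero]
    generalize a - algebraMap R A r = x at hr
    induction hr using Submodule.span_induction with
    | mem x hx => simp [hD x hx]
    | zero => simp
    | add x y _ _ hx hy => simpa using add_mem hx hy
    | smul b x hx hDx =>
      rw [smul_eq_mul, D.leibniz, pow_succ', Submodule.mul_smul]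
      exact add_mem (Submodule.smul_mem _ b (by rwa [← Submodule.mul_smul, ← pow_succ']))
        (Submodule.smul_mem_smul hx (ih b))

lemma derivation_ext_of_isHausdorff {s : Set A} [IsHausdorff (Ideal.span s) M]
    (hA : ∀ a : A, ∃ r : R, a - algebraMap R A r ∈ Ideal.span s)
    {D D' : Derivation R A M} (h : ∀ x ∈ s, D x = D' x) : D = D' := by
  ext a
  refine sub_eq_zero.1 (IsHausdorff.haus' (I := Ideal.span s) _ fun K => SModEq.zero.2 ?_)
  exact derivation_mem_pow_smul_top (D := D - D') hA (fun x hx => sub_eq_zero.2 (h x hx)) K a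

lemma derivation_algHom_apply {B : Type*} [CommRing B] [Algebra R B] (F : A →ₐ[R] B) {s : Set A}
    (hB : IsHausdorff (Ideal.map F (Ideal.span s)) B)
    (hA : ∀ a : A, ∃ r : R, a - algebraMap R A r ∈ Ideal.span s)
    {D : Derivation R A A} {E : Derivation R B B} (h : ∀ x ∈ s, E (F x) = F (D x)) (a : A) :
    E (F a) = F (D a) := by
  let _ : Algebra A B := F.toAlgebra
  have : IsScalarTower R A B := .of_algHom F
  have : IsHausdorff (Ideal.span s) B := IsHausdorff.map_algebraMap_iff.1 hB
  exact DFunLike.congr_fun (derivation_ext_of_isHausdorff (D := E.compAlgebraMap A)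
    (D' := (Algebra.linearMap A B).compDer D) hA h) a

lemma derivation_mem_span {D : Derivation R A A} {s : Set A} (hD : ∀ x ∈ s, D x ∈ Ideal.span s)
    {a : A} (ha : a ∈ Ideal.span s) : D a ∈ Ideal.span s := by
  induction ha using Submodule.span_induction with
  | mem x hx => exact hD x hx
  | zero => simp
  | add x y _ _ hx hy => simpa using add_mem hx hy
  | smul b x hx hDx =>
    rw [smul_eq_mul, D.leibniz]
    exact add_mem (Ideal.mul_mem_left _ b hDx) (Ideal.mul_mem_right _ _ hx)

/-- The derivation obtained from `D` by transport along an automorphism. -/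
def conjDerivation (e : A ≃ₐ[R] A) (D : Derivation R A A) : Derivation R A A :=
  Derivation.mk' (e.symm.toLinearMap ∘ₗ (D : A →ₗ[R] A) ∘ₗ e.toLinearMap) fun a b => by simp

lemma conjDerivation_apply (e : A ≃ₐ[R] A) (D : Derivation R A A) (a : A) :
    conjDerivation e D a = e.symm (D (e a)) := rfl

end Hausdorff

section Coordinates

open On

lemma derivation_ext_coordG {D D' : Derivation ℂ (On n) (On n)}
    (h : ∀ i, D (coordG i) = D' (coordG i)) : D = D' := by
  have : IsHausdorff (Ideal.span (Set.range (coordG (n := n)))) (On n) := by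
    rw [← mId_eq_span_coordG, ← maximalIdeal_On]
    infer_instance
  refine derivation_ext_of_isHausdorff (s := Set.range coordG) (fun a => ?_) (by simpa using h)
  rw [← mId_eq_span_coordG]
  exact ⟨_, sub_algebraMap_evalZero_mem a⟩

lemma rep_pullback (φ : CoordChange n) (g : On n) :
    rep (pullback φ g) =ᶠ[𝓝 0] fun x => rep g (φ.toFun x) := by
  refine Filter.Germ.coe_eq.1 ((rep_spec _).trans ?_)
  change (g : Filter.Germ (𝓝 (0 : Fin n → ℂ)) ℂ).compTendsto φ.toFun φ.tendsto = _
  rw [← rep_spec g]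
  rfl

/-- The inverse change of coordinates. -/
def CoordChange.symm (φ : CoordChange n) : CoordChange n where
  toFun := φ.invFun
  invFun := φ.toFun
  analyticAt := φ.inv_analyticAt
  inv_analyticAt := φ.analyticAt
  map_zero := φ.inv_map_zero
  inv_map_zero := φ.map_zero
  left_inv := φ.right_inv
  right_inv := φ.left_inv

lemma pullback_symm_pullback (φ : CoordChange n) (g : On n) :
    pullback φ.symm (pullback φ g) = g := by
  refine eq_of_rep_eventuallyEq ((rep_pullback _ _).trans ?_)
  filter_upwards [φ.symm.tendsto.eventually (rep_pullback φ g), φ.right_inv] with x hx hinv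
  exact hx.trans (congrArg (rep g) hinv)

/-- Pullback along a change of coordinates, as an automorphism of `𝒪ₙ`. -/
def pullbackEquiv (φ : CoordChange n) : On n ≃ₐ[ℂ] On n where
  toFun := pullback φ
  invFun := pullback φ.symm
  left_inv := pullback_symm_pullback φ
  right_inv := pullback_symm_pullback φ.symm
  map_mul' a b := eq_of_rep_eventuallyEq <| (rep_pullback φ _).trans <| by
    filter_upwards [φ.tendsto.eventually (rep_mul a b), rep_pullback φ a, rep_pullback φ b,
      rep_mul (pullback φ a) (pullback φ b)] with x hab ha hb hmul
    rw [hab, hmul, Pi.mul_apply, Pi.mul_apply, ha, hb]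
  map_add' a b := eq_of_rep_eventuallyEq <| (rep_pullback φ _).trans <| by
    filter_upwards [φ.tendsto.eventually (rep_add a b), rep_pullback φ a, rep_pullback φ b,
      rep_add (pullback φ a) (pullback φ b)] with x hab ha hb hadd
    rw [hab, hadd, Pi.add_apply, Pi.add_apply, ha, hb]
  commutes' c := eq_of_rep_eventuallyEq <| (rep_pullback φ _).trans <|
    .trans (φ.tendsto.eventually (rep_algebraMap c)) (rep_algebraMap c).symm

/-- The coordinate functions of the coordinate system obtained from the standard one by `φ`. -/
def coordOf (φ : CoordChange n) (i : Fin n) : On n := (pullbackEquiv φ).symm (coordG i)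

lemma span_coordOf (φ : CoordChange n) : Ideal.span (Set.range (coordOf φ)) = mId n := by
  have hmap : Ideal.map (pullbackEquiv φ).symm (mId n) = mId n := by
    rw [← maximalIdeal_On]
    exact IsLocalRing.map_ringEquiv_maximalIdeal (pullbackEquiv φ).symm.toRingEquiv
  rw [← hmap, mId_eq_span_coordG, Ideal.map_span, ← Set.range_comp]
  rfl

/-- The Euler field `∑ wᵢ yᵢ ∂/∂yᵢ` of the coordinate system `y = coordOf φ`. -/
def eulerDerivation (w : Fin n → ℚ) (φ : CoordChange n) : Derivation ℂ (On n) (On n) :=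
  conjDerivation (pullbackEquiv φ) (vfDerivation fun i => (w i : ℂ) • coordG i)

lemma isQH_pullback_iff {w : Fin n → ℚ} {d : ℚ} {φ : CoordChange n} {g : On n} :
    IsQH n w d (pullback φ g) ↔ eulerDerivation w φ g = (d : ℂ) • g := by
  rw [eulerDerivation, conjDerivation_apply, AlgEquiv.symm_apply_eq, map_smul, vfDerivation_apply,
    applyVF, IsQH]
  simp only [smul_mul_assoc]
  rfl

lemma eulerDerivation_coordOf (w : Fin n → ℚ) (φ : CoordChange n) (j : Fin n) :
    eulerDerivation w φ (coordOf φ j) = (w j : ℂ) • coordOf φ j := by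
  rw [eulerDerivation, conjDerivation_apply, coordOf, AlgEquiv.apply_symm_apply,
    vfDerivation_coordG, map_smul]

end Coordinates

section LinearPart

open On

/-- The gradient of a germ at the origin. -/
def gradZero (n : ℕ) : On n →ₗ[ℂ] (Fin n → ℂ) :=
  LinearMap.pi fun i => (evalZero n).toLinearMap ∘ₗ (pdDerivation i : On n →ₗ[ℂ] On n)

lemma gradZero_apply (g : On n) (i : Fin n) : gradZero n g i = evalZero n (pd i g) := rfl

lemma gradZero_mul (a b : On n) :
    gradZero n (a * b) = evalZero n a • gradZero n b + evalZero n b • gradZero n a := by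
  ext i
  simp [gradZero_apply, pd_mul]

lemma gradZero_coordG (i : Fin n) : gradZero n (coordG i) = Pi.single i 1 := by
  ext j
  rw [gradZero_apply, pd_coordG, Pi.single_apply]
  split_ifs <;> simp

lemma gradZero_sum_smul_coordG (v : Fin n → ℂ) : gradZero n (∑ i, v i • coordG i) = v := by
  simp [gradZero_coordG, ← pi_eq_sum_univ']

lemma gradZero_eq_zero_of_mem_sq {g : On n} (hg : g ∈ mId n ^ 2) : gradZero n g = 0 := by
  rw [pow_two] at hg
  refine Submodule.mul_induction_on hg (fun a ha b hb => ?_) fun a b ha hb => by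
    rw [map_add, ha, hb, add_zero]
  rw [gradZero_mul, mem_mId.1 ha, mem_mId.1 hb, zero_smul, zero_smul, add_zero]

lemma gradZero_vfDerivation {δ : Fin n → On n} (hδ : ∀ i, δ i ∈ mId n) (g : On n) :
    gradZero n (vfDerivation δ g) = (linPart δ).toLin' (gradZero n g) := by
  rw [vfDerivation_apply, applyVF, map_sum]
  simp only [gradZero_mul, mem_mId.1 (hδ _), zero_smul, zero_add]
  ext i
  rw [Finset.sum_apply, Matrix.toLin'_apply, Matrix.mulVec, dotProduct]
  exact Finset.sum_congr rfl fun k _ => mul_comm _ _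

lemma fderiv_rep_apply (g : On n) (v : Fin n → ℂ) :
    fderiv ℂ (rep g) 0 v = ∑ i, gradZero n g i * v i := by
  conv_lhs => rw [pi_eq_sum_univ' v, map_sum]
  refine Finset.sum_congr rfl fun i _ => ?_
  rw [map_smul, smul_eq_mul, mul_comm]
  exact congrArg (· * v i) (rep_pd_eventuallyEq (.refl _ (rep g))).self_of_nhds.symm

lemma span_gradZero_eq_top {ι : Type*} {y : ι → On n} (hy : Ideal.span (Set.range y) = mId n) :
    Submodule.span ℂ (Set.range fun j => gradZero n (y j)) = ⊤ := by
  have grad_mem {g : On n} (hg : g ∈ Ideal.span (Set.range y)) :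
      gradZero n g ∈ Submodule.span ℂ (Set.range fun j => gradZero n (y j)) := by
    induction hg using Submodule.span_induction with
    | mem g hg =>
      obtain ⟨j, rfl⟩ := hg
      exact Submodule.subset_span (Set.mem_range_self j)
    | zero => simp
    | add g g' _ _ hg hg' => simpa using add_mem hg hg'
    | smul a g hg ih =>
      have hg0 : evalZero n g = 0 := mem_mId.1 (hy.le hg)
      rw [smul_eq_mul, gradZero_mul, hg0, zero_smul, add_zero]
      exact Submodule.smul_mem _ _ ih
  rw [eq_top_iff, ← (Pi.basisFun ℂ (Fin n)).span_eq, Submodule.span_le]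
  rintro _ ⟨i, rfl⟩
  rw [Pi.basisFun_apply, ← gradZero_coordG]
  exact grad_mem (hy.ge (coordG_mem_mId i))

lemma eigsEq_of_eigenbasis {δ : Fin n → On n} {w : Fin n → ℚ}
    (b : Module.Basis (Fin n) ℂ (Fin n → ℂ))
    (hb : ∀ j, (linPart δ).toLin' (b j) = (w j : ℂ) • b j) : EigsEq δ w := by
  have hdiag : LinearMap.toMatrix b b (linPart δ).toLin' = Matrix.diagonal fun j => (w j : ℂ) := by
    ext i j
    rw [LinearMap.toMatrix_apply, hb, map_smul, Module.Basis.repr_self, Matrix.diagonal_apply]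
    simp only [Finsupp.smul_single, smul_eq_mul, mul_one, Finsupp.single_apply, eq_comm]
    split_ifs with h <;> simp [h]
  rw [EigsEq, ← Matrix.charpoly_toLin', ← LinearMap.charpoly_toMatrix _ b, hdiag,
    Matrix.charpoly_diagonal]

lemma exists_hasStrictFDerivAt_equiv {y : Fin n → On n}
    (hy : LinearIndependent ℂ fun j => gradZero n (y j)) :
    ∃ L : (Fin n → ℂ) ≃L[ℂ] (Fin n → ℂ),
      HasStrictFDerivAt (fun x j => rep (y j) x) (L : (Fin n → ℂ) →L[ℂ] (Fin n → ℂ)) 0 := by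
  let J : Matrix (Fin n) (Fin n) ℂ := Matrix.of fun j => gradZero n (y j)
  have hJ : Function.Injective J.toLin' :=
    Matrix.mulVec_injective_of_isUnit (Matrix.linearIndependent_rows_iff_isUnit.1 hy)
  refine ⟨(LinearEquiv.ofInjectiveEndo J.toLin' hJ).toContinuousLinearEquiv,
    hasStrictFDerivAt_pi'.2 fun j => ?_⟩
  convert (rep_analyticAt (y j)).hasStrictFDerivAt using 1
  ext v
  rw [fderiv_rep_apply]
  rfl

lemma exists_coordChange {y : Fin n → On n} (hy0 : ∀ j, y j ∈ mId n)
    (hy : LinearIndependent ℂ fun j => gradZero n (y j)) :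
    ∃ φ : CoordChange n, coordOf φ = y := by
  obtain ⟨L, hL⟩ := exists_hasStrictFDerivAt_equiv hy
  have analytic : AnalyticAt ℂ (fun x j => rep (y j) x) 0 := .pi fun j => rep_analyticAt (y j)
  have map_zero : (fun j => rep (y j) 0) = 0 := funext fun j => mem_mId.1 (hy0 j)
  let e := hL.toOpenPartialHomeomorph _
  have mem_source : 0 ∈ e.source := hL.mem_toOpenPartialHomeomorph_source
  have e_zero : e 0 = 0 := map_zero
  have symm_zero : e.symm 0 = 0 := by
    rw [← e_zero, e.left_inv mem_source, e_zero]
  let φ : CoordChange n :=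
    { toFun := e.symm
      invFun := e
      analyticAt := e_zero ▸ e.analyticAt_symm' mem_source analytic hL.hasFDerivAt.fderiv
      inv_analyticAt := analytic
      map_zero := symm_zero
      inv_map_zero := e_zero
      left_inv := e.eventually_right_inverse (e_zero ▸ e.map_source mem_source)
      right_inv := e.eventually_left_inverse mem_source }
  refine ⟨φ, funext fun j => (AlgEquiv.symm_apply_eq _).2 ?_⟩
  refine eq_of_rep_eventuallyEq ((rep_mkOn _ _).trans (.trans ?_ (rep_pullback φ (y j)).symm))
  filter_upwards [φ.left_inv] with x hx
  exact (congrFun hx j).symm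

theorem exists_logarithmic_euler_of_relQH {X : Set (Fin n → ℂ)} {f : On n} {w : Fin n → ℚ}
    (h : RelQH n X f w) :
    ∃ δ : Fin n → On n, δ ∈ ThetaX n X ∧ (∀ i, δ i ∈ mId n) ∧ applyVF δ f = f ∧ EigsEq δ w := by
  obtain ⟨φ, hf, m, h, d, hspan, -, hh⟩ := h
  have smul_mem {ι : Type} (v : ι → On n) (c : ℂ) (i : ι) : c • v i ∈ Ideal.span (Set.range v) :=
    Submodule.smul_of_tower_mem _ c (Ideal.subset_span (Set.mem_range_self i))
  let δ i := eulerDerivation w φ (coordG i)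
  have hδ (g : On n) : eulerDerivation w φ g = applyVF δ g := by
    rw [← vfDerivation_apply]
    exact DFunLike.congr_fun (derivation_ext_coordG fun i => (vfDerivation_coordG δ i).symm) g
  have hδm i : δ i ∈ mId n := by
    rw [← span_coordOf φ]
    refine derivation_mem_span ?_ ((span_coordOf φ).ge (coordG_mem_mId i))
    rintro _ ⟨j, rfl⟩
    exact eulerDerivation_coordOf w φ j ▸ smul_mem _ _ j
  refine ⟨δ, fun g hg => ?_, hδm, ?_, ?_⟩
  · rw [← hspan] at hg ⊢
    rw [← hδ]
    refine derivation_mem_span ?_ hg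
    rintro _ ⟨j, rfl⟩
    exact isQH_pullback_iff.1 (hh j) ▸ smul_mem _ _ j
  · rw [← hδ, isQH_pullback_iff.1 hf, Rat.cast_one, one_smul]
  · let b := basisOfTopLeSpanOfCardEqFinrank (fun j => gradZero n (coordOf φ j))
      (span_gradZero_eq_top (span_coordOf φ)).ge (by simp)
    refine eigsEq_of_eigenbasis b fun j => ?_
    have hbj : b j = gradZero n (coordOf φ j) := by
      simp only [b, coe_basisOfTopLeSpanOfCardEqFinrank]
    rw [hbj, ← gradZero_vfDerivation hδm, vfDerivation_apply, ← hδ, eulerDerivation_coordOf,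
      map_smul]

end LinearPart

section DiagonalPerturbation

variable {σ 𝕜 : Type*} [NormedField 𝕜] {ρ : σ → ℝ≥0}

/-- The operator multiplying the coefficient of the monomial `α` by `G α`. -/
def diagonalOp (G : (σ →₀ ℕ) → 𝕜) : Module.End 𝕜 (MvPowerSeries σ 𝕜) where
  toFun v := fun α => G α * MvPowerSeries.coeff α v
  map_add' u v := funext fun α => by rw [map_add, mul_add]; rfl
  map_smul' c v := funext fun α => mul_left_comm _ _ _

lemma coeff_diagonalOp (G : (σ →₀ ℕ) → 𝕜) (v : MvPowerSeries σ 𝕜) (α : σ →₀ ℕ) :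
    MvPowerSeries.coeff α (diagonalOp G v) = G α * MvPowerSeries.coeff α v := rfl

lemma wnorm_diagonalOp_le {G : (σ →₀ ℕ) → 𝕜} {C : ℝ≥0∞} (hG : ∀ α, ‖G α‖ₑ ≤ C)
    (v : MvPowerSeries σ 𝕜) : wnorm ρ (diagonalOp G v) ≤ C * wnorm ρ v := by
  rw [wnorm, wnorm, ← ENNReal.tsum_mul_left]
  refine ENNReal.tsum_le_tsum fun α => ?_
  rw [coeff_diagonalOp, enorm_mul, mul_assoc]
  gcongr
  exact hG α

lemma wnorm_pderiv_diagonalOp_le {G : (σ →₀ ℕ) → 𝕜} {C : ℝ≥0∞} {j : σ}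
    (hG : ∀ α, ‖G α * (α j : 𝕜)‖ₑ ≤ C) (v : MvPowerSeries σ 𝕜) :
    wnorm ρ (MvPowerSeries.pderiv 𝕜 j (diagonalOp G v)) * ρ j ≤ C * wnorm ρ v := by
  rw [wnorm, wnorm, ← ENNReal.tsum_mul_left, ← ENNReal.tsum_mul_right]
  refine (ENNReal.tsum_le_tsum fun α => ?_).trans (ENNReal.tsum_comp_le_tsum_of_injective
    (add_left_injective (Finsupp.single j 1)) _)
  have hα : MvPowerSeries.coeff α (MvPowerSeries.pderiv 𝕜 j (diagonalOp G v)) =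
      G (α + Finsupp.single j 1) * ((α + Finsupp.single j 1 : σ →₀ ℕ) j : 𝕜) *
        MvPowerSeries.coeff (α + Finsupp.single j 1) v := by
    rw [MvPowerSeries.coeff_pderiv, coeff_diagonalOp, Finsupp.add_apply, Finsupp.single_eq_same]
    push_cast
    ring
  rw [hα, enorm_mul, multiPow_add, multiPow_single, pow_one, ENNReal.coe_mul, mul_assoc, mul_assoc]
  gcongr
  exact hG _

lemma exists_add_sum_mul_pderiv_diagonalOp_eq [CompleteSpace 𝕜] [Fintype σ] (hρ : ∀ i, 0 < ρ i)
    {G : (σ →₀ ℕ) → 𝕜} {C : ℝ≥0∞} (hG : ∀ j α, ‖G α * (α j : 𝕜)‖ₑ ≤ C)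
    {p : σ → MvPowerSeries σ 𝕜} (hp : C * ∑ j, wnorm ρ (p j) / ρ j < 1)
    {h : MvPowerSeries σ 𝕜} (hh : wnorm ρ h ≠ ⊤) :
    ∃ v, v + ∑ j, p j * MvPowerSeries.pderiv 𝕜 j (diagonalOp G v) = h ∧ wnorm ρ v ≠ ⊤ := by
  let T : Module.End 𝕜 (MvPowerSeries σ 𝕜) := ∑ j, LinearMap.mulLeft 𝕜 (p j) ∘ₗ
    (MvPowerSeries.pderiv 𝕜 j : MvPowerSeries σ 𝕜 →ₗ[𝕜] MvPowerSeries σ 𝕜) ∘ₗ diagonalOp G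
  have T_apply (v) : T v = ∑ j, p j * MvPowerSeries.pderiv 𝕜 j (diagonalOp G v) := by
    simp [T, LinearMap.sum_apply]
  have pderiv_le (j) (v : MvPowerSeries σ 𝕜) :
      wnorm ρ (MvPowerSeries.pderiv 𝕜 j (diagonalOp G v)) ≤ C * wnorm ρ v / ρ j :=
    (ENNReal.le_div_iff_mul_le (.inl (by simpa using (hρ j).ne'))
      (.inl ENNReal.coe_ne_top)).2 (wnorm_pderiv_diagonalOp_le (hG j) v)
  have T_le (v) : wnorm ρ (T v) ≤ C * (∑ j, wnorm ρ (p j) / ρ j) * wnorm ρ v := calc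
    wnorm ρ (T v)
      ≤ ∑ j, wnorm ρ (p j) * wnorm ρ (MvPowerSeries.pderiv 𝕜 j (diagonalOp G v)) := by
        rw [T_apply]
        exact (wnorm_sum_le _ _ _).trans (Finset.sum_le_sum fun j _ => wnorm_mul_le _ _ _)
    _ ≤ ∑ j, wnorm ρ (p j) * (C * wnorm ρ v / ρ j) := by
        gcongr with j
        exact pderiv_le j v
    _ = C * (∑ j, wnorm ρ (p j) / ρ j) * wnorm ρ v := by
        rw [Finset.mul_sum, Finset.sum_mul]
        refine Finset.sum_congr rfl fun j _ => ?_
        simp only [ENNReal.div_eq_inv_mul]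
        ring
  obtain ⟨v, hv, hv_top⟩ := exists_add_apply_eq_of_wnorm_le hρ T hp T_le hh
  exact ⟨v, T_apply v ▸ hv, hv_top⟩

lemma wnorm_mul_radius_le_of_le_order {c : MvPowerSeries σ 𝕜} {k : ℕ} (hk : k ≤ c.order) {t : ℝ≥0}
    (ht : t ≤ 1) : wnorm (fun i => t * ρ i) c ≤ t ^ k * wnorm ρ c := by
  rw [wnorm, wnorm, ← ENNReal.tsum_mul_left]
  refine ENNReal.tsum_le_tsum fun α => ?_
  rw [mul_multiPow, multiPow_const, ENNReal.coe_mul, ENNReal.coe_pow, mul_left_comm]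
  by_cases hα : α.degree < k
  · rw [MvPowerSeries.coeff_of_lt_order (lt_of_lt_of_le (by exact_mod_cast hα) hk)]
    simp
  · gcongr ?_ * _
    exact pow_le_pow_of_le_one zero_le (by exact_mod_cast ht) (not_lt.1 hα)

/-- The homogeneous part of degree one. -/
def linearTerm [Fintype σ] (c : MvPowerSeries σ 𝕜) : MvPowerSeries σ 𝕜 :=
  ∑ i, MvPowerSeries.monomial (Finsupp.single i 1)
    (MvPowerSeries.coeff (Finsupp.single i 1) c)

lemma two_le_order_sub_linearTerm [Fintype σ] {c : MvPowerSeries σ 𝕜}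
    (hc : c.constantCoeff = 0) : 2 ≤ (c - linearTerm c).order := by
  classical
  refine MvPowerSeries.nat_le_order (n := 2) fun α hα => ?_
  rw [linearTerm, map_sub, map_sum]
  simp only [MvPowerSeries.coeff_monomial]
  obtain hα | hα : α.degree = 0 ∨ α.degree = 1 := by lia
  · obtain rfl := (Finsupp.degree_eq_zero_iff α).1 hα
    simp [hc, eq_comm]
  · obtain ⟨i, rfl⟩ := (Finsupp.sum_eq_one_iff α).1 hα
    simp [Finsupp.single_left_inj one_ne_zero]

lemma exists_wnorm_const_le [Fintype σ] {c : MvPowerSeries σ 𝕜} (hc : c ∈ convergent σ 𝕜)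
    (hc0 : c.constantCoeff = 0) :
    ∃ K : ℝ≥0∞, K ≠ ⊤ ∧ ∀ᶠ r : ℝ≥0 in 𝓝[>] 0, wnorm (fun _ => r) c / r ≤
      ∑ i, ‖MvPowerSeries.coeff (Finsupp.single i 1) c‖ₑ + r * K := by
  let q := c - linearTerm c
  have hq : q ∈ convergent σ 𝕜 :=
    sub_mem hc (sum_mem fun i _ => monomial_mem_convergent _ _)
  obtain ⟨ρ, hρ, hqρ⟩ := hq
  obtain ⟨s, hs, hsρ⟩ := exists_const_pos_le hρ
  have hs_sq : ((s : ℝ≥0∞) ^ 2) ≠ 0 := by simpa using hs.ne'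
  refine ⟨wnorm (fun _ => s) q / s ^ 2, ENNReal.div_ne_top
    (ne_top_of_le_ne_top hqρ (wnorm_mono hsρ q)) hs_sq, ?_⟩
  filter_upwards [Ioc_mem_nhdsGT hs] with r ⟨_, hrs⟩
  have linear_le : wnorm (fun _ => r) (linearTerm c) ≤
      (∑ i, ‖MvPowerSeries.coeff (Finsupp.single i 1) c‖ₑ) * r := by
    refine (wnorm_sum_le _ _ _).trans_eq ?_
    simp only [wnorm_monomial, multiPow_single, pow_one, Finset.sum_mul]
  have rest_le : wnorm (fun _ => r) q ≤ r * (wnorm (fun _ => s) q / s ^ 2) * r := by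
    have hrs' : (fun _ : σ => r) = fun _ => r / s * s := by rw [div_mul_cancel₀ _ hs.ne']
    rw [hrs']
    refine (wnorm_mul_radius_le_of_le_order (two_le_order_sub_linearTerm hc0)
      (div_le_one_of_le₀ hrs zero_le)).trans_eq ?_
    rw [ENNReal.coe_div hs.ne', ENNReal.div_eq_inv_mul, ENNReal.div_eq_inv_mul, mul_pow,
      ENNReal.inv_pow]
    ring
  refine ENNReal.div_le_of_le_mul ?_
  rw [add_mul]
  refine le_trans ?_ (add_le_add linear_le rest_le)
  simpa only [q, add_sub_cancel] using wnorm_add_le (fun _ => r) (linearTerm c) q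

lemma eventually_wnorm_const_ne_top [Finite σ] {c : MvPowerSeries σ 𝕜} (hc : c ∈ convergent σ 𝕜) :
    ∀ᶠ r : ℝ≥0 in 𝓝[>] 0, wnorm (fun _ => r) c ≠ ⊤ := by
  obtain ⟨ρ, hρ, hcρ⟩ := hc
  obtain ⟨s, hs, hsρ⟩ := exists_const_pos_le hρ
  filter_upwards [Ioc_mem_nhdsGT hs] with r hr
  exact ne_top_of_le_ne_top hcρ (wnorm_mono (fun i => hr.2.trans (hsρ i)) c)

lemma eventually_mul_sum_wnorm_const_div_lt_one [Fintype σ] {p : σ → MvPowerSeries σ 𝕜}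
    (hp : ∀ j, p j ∈ convergent σ 𝕜) (hp0 : ∀ j, (p j).constantCoeff = 0) {C : ℝ≥0∞} (hC : C ≠ ⊤)
    (hpC : C * ∑ j, ∑ i, ‖MvPowerSeries.coeff (Finsupp.single i 1) (p j)‖ₑ < 1) :
    ∀ᶠ r : ℝ≥0 in 𝓝[>] 0, C * ∑ j, wnorm (fun _ => r) (p j) / r < 1 := by
  choose K hK_top hK using fun j => exists_wnorm_const_le (hp j) (hp0 j)
  let bound (r : ℝ≥0) : ℝ≥0∞ :=
    C * ∑ j, (∑ i, ‖MvPowerSeries.coeff (Finsupp.single i 1) (p j)‖ₑ + r * K j)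
  have hbound : Tendsto bound (𝓝[>] 0)
      (𝓝 (C * ∑ j, ∑ i, ‖MvPowerSeries.coeff (Finsupp.single i 1) (p j)‖ₑ)) := by
    refine ENNReal.Tendsto.const_mul (tendsto_finsetSum _ fun j _ => ?_) (.inr hC)
    have hr : Tendsto (fun r : ℝ≥0 => (r : ℝ≥0∞)) (𝓝[>] 0) (𝓝 0) :=
      (ENNReal.tendsto_coe.2 tendsto_id).mono_left nhdsWithin_le_nhds
    simpa using (ENNReal.Tendsto.mul_const hr (.inr (hK_top j))).const_add
      (∑ i, ‖MvPowerSeries.coeff (Finsupp.single i 1) (p j)‖ₑ)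
  filter_upwards [hbound.eventually_lt_const hpC, eventually_all.2 hK] with r hr hrK
  exact lt_of_le_of_lt (mul_le_mul' le_rfl (Finset.sum_le_sum fun j _ => hrK j)) hr

end DiagonalPerturbation

section HomologicalEquation

lemma coeff_X_mul_pderiv {σ R : Type*} [CommRing R] (j : σ) (u : MvPowerSeries σ R) (α : σ →₀ ℕ) :
    MvPowerSeries.coeff α (MvPowerSeries.X j * MvPowerSeries.pderiv R j u) =
      α j * MvPowerSeries.coeff α u := by
  rw [MvPowerSeries.X, MvPowerSeries.coeff_monomial_mul, one_mul]
  split_ifs with hj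
  · obtain ⟨β, rfl⟩ := le_iff_exists_add.1 hj
    rw [add_tsub_cancel_left, MvPowerSeries.coeff_pderiv, add_comm β, Finsupp.add_apply,
      Finsupp.single_eq_same, Nat.cast_add, Nat.cast_one, mul_comm, add_comm 1]
  · rw [Finsupp.single_le_iff, not_le, Nat.lt_one_iff] at hj
    rw [hj, Nat.cast_zero, zero_mul]

lemma le_order_mul_pderiv {σ R : Type*} [CommRing R] {p u : MvPowerSeries σ R} {M : ℕ}
    (hp : p.constantCoeff = 0) (hu : M ≤ u.order) (j : σ) :
    M ≤ (p * MvPowerSeries.pderiv R j u).order := by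
  have hderiv : ((M - 1 : ℕ) : ℕ∞) ≤ (MvPowerSeries.pderiv R j u).order := by
    refine MvPowerSeries.nat_le_order fun α hα => ?_
    rw [MvPowerSeries.coeff_pderiv, MvPowerSeries.coeff_of_lt_order, zero_mul]
    refine lt_of_lt_of_le ?_ hu
    rw [map_add, Finsupp.degree_single]
    exact_mod_cast Nat.add_lt_of_lt_sub hα
  refine le_trans ?_ ((add_le_add (MvPowerSeries.one_le_order_iff_constCoeff_eq_zero.2 hp)
    hderiv).trans MvPowerSeries.le_order_mul)
  exact_mod_cast (by lia : M ≤ 1 + (M - 1))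

variable {σ : Type*} [Fintype σ] {μ : σ → ℝ} {a : ℝ} {c : ℂ} {M : ℕ}

lemma half_mul_degree_le_norm_sub (hμ : ∀ j, a ≤ μ j) {α : σ →₀ ℕ}
    (hα : 2 * ‖c‖ ≤ a * α.degree) : a / 2 * α.degree ≤ ‖∑ j, (μ j : ℂ) * α j - c‖ := by
  have weight_ge : a * α.degree ≤ ∑ j, μ j * α j := by
    rw [Finsupp.degree_eq_sum, Nat.cast_sum, Finset.mul_sum]
    gcongr with j
    exact hμ j
  have hcast : ∑ j, (μ j : ℂ) * α j = ((∑ j, μ j * α j : ℝ) : ℂ) := by push_cast; rfl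
  calc a / 2 * α.degree ≤ ∑ j, μ j * α j - ‖c‖ := by linarith
    _ ≤ ‖((∑ j, μ j * α j : ℝ) : ℂ)‖ - ‖c‖ := by
      rw [Complex.norm_real]
      gcongr
      exact Real.le_norm_self _
    _ ≤ _ := hcast ▸ norm_sub_norm_le _ _

lemma exists_truncated_resolvent (ha : 0 < a) (hμ : ∀ j, a ≤ μ j) (hM : 1 ≤ M)
    (hcM : 2 * ‖c‖ ≤ a * M) :
    ∃ G : (σ →₀ ℕ) → ℂ, (∀ α, M ≤ α.degree → (∑ j, (μ j : ℂ) * α j - c) * G α = 1) ∧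
      (∀ α, α.degree < M → G α = 0) ∧ (∀ α, ‖G α‖ₑ ≤ ENNReal.ofReal (2 / a)) ∧
      ∀ j α, ‖G α * (α j : ℂ)‖ₑ ≤ ENNReal.ofReal (2 / a) := by
  have lower {α : σ →₀ ℕ} (hα : M ≤ α.degree) :
      a / 2 * α.degree ≤ ‖∑ j, (μ j : ℂ) * α j - c‖ :=
    half_mul_degree_le_norm_sub hμ (hcM.trans (by gcongr))
  have one_le {α : σ →₀ ℕ} (hα : M ≤ α.degree) : (1 : ℝ) ≤ α.degree := by
    exact_mod_cast hM.trans hα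
  have pos {α : σ →₀ ℕ} (hα : M ≤ α.degree) : 0 < ‖∑ j, (μ j : ℂ) * α j - c‖ :=
    lt_of_lt_of_le (by have := one_le hα; positivity) (lower hα)
  have enorm_le {α : σ →₀ ℕ} (hα : M ≤ α.degree) {k : ℕ} (hk : k ≤ α.degree) :
      ‖(∑ j, (μ j : ℂ) * α j - c)⁻¹ * k‖ₑ ≤ ENNReal.ofReal (2 / a) := by
    rw [← ofReal_norm]
    refine ENNReal.ofReal_le_ofReal ?_
    rw [norm_mul, norm_inv, Complex.norm_natCast, inv_mul_le_iff₀ (pos hα), mul_div_assoc',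
      le_div_iff₀ ha]
    have : (k : ℝ) ≤ α.degree := by exact_mod_cast hk
    nlinarith [lower hα]
  refine ⟨fun α => if M ≤ α.degree then (∑ j, (μ j : ℂ) * α j - c)⁻¹ else 0,
    fun α hα => ?_, fun α hα => if_neg hα.not_ge, fun α => ?_, fun j α => ?_⟩
  · simp only [if_pos hα]
    exact mul_inv_cancel₀ (norm_pos_iff.1 (pos hα))
  · dsimp only
    split_ifs with hα
    · simpa using enorm_le hα (k := 1) (hM.trans hα)
    · simp
  · dsimp only
    split_ifs with hα
    · exact enorm_le hα (Finsupp.le_degree j α)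
    · simp

theorem exists_sum_mul_pderiv_sub_smul_eq (ha : 0 < a) (hμ : ∀ j, a ≤ μ j)
    {p : σ → MvPowerSeries σ ℂ} (hp : ∀ j, p j ∈ convergent σ ℂ)
    (hp0 : ∀ j, (p j).constantCoeff = 0)
    (hpa : ∑ j, ∑ i, ‖MvPowerSeries.coeff (Finsupp.single i 1) (p j)‖ < a / 2)
    (hM : 1 ≤ M) (hcM : 2 * ‖c‖ ≤ a * M) {h : MvPowerSeries σ ℂ} (hh : h ∈ convergent σ ℂ)
    (hMh : M ≤ h.order) :
    ∃ u ∈ convergent σ ℂ, M ≤ u.order ∧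
      ∑ j, ((μ j : ℂ) • MvPowerSeries.X j + p j) * MvPowerSeries.pderiv ℂ j u - c • u = h := by
  obtain ⟨G, hG, hG_zero, hG_le, hG_mul_le⟩ := exists_truncated_resolvent ha hμ hM hcM
  have hpC : ENNReal.ofReal (2 / a) *
      ∑ j, ∑ i, ‖MvPowerSeries.coeff (Finsupp.single i 1) (p j)‖ₑ < 1 := by
    have hsum : ∑ j, ∑ i, ‖MvPowerSeries.coeff (Finsupp.single i 1) (p j)‖ₑ =
        ENNReal.ofReal (∑ j, ∑ i, ‖MvPowerSeries.coeff (Finsupp.single i 1) (p j)‖) := by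
      rw [ENNReal.ofReal_sum_of_nonneg fun _ _ => Finset.sum_nonneg fun _ _ => norm_nonneg _]
      simp only [ENNReal.ofReal_sum_of_nonneg fun _ _ => norm_nonneg _, ofReal_norm]
    rw [hsum, ← ENNReal.ofReal_mul (by positivity), ENNReal.ofReal_lt_one, div_mul_eq_mul_div,
      div_lt_one ha]
    linarith
  obtain ⟨r, ⟨hr, hpr⟩, hhr⟩ := ((eventually_mem_nhdsWithin.and
    (eventually_mul_sum_wnorm_const_div_lt_one hp hp0 ENNReal.ofReal_ne_top hpC)).and
      (eventually_wnorm_const_ne_top hh)).exists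
  obtain ⟨v, hv, hv_top⟩ :=
    exists_add_sum_mul_pderiv_diagonalOp_eq (fun _ => hr) hG_mul_le hpr hhr
  have hu : M ≤ (diagonalOp G v).order := MvPowerSeries.nat_le_order fun α hα => by
    rw [coeff_diagonalOp, hG_zero α hα, zero_mul]
  have hv_zero {α : σ →₀ ℕ} (hα : α.degree < M) : MvPowerSeries.coeff α v = 0 := by
    have hα' : (α.degree : ℕ∞) < M := by exact_mod_cast hα
    rw [eq_sub_of_add_eq hv, map_sub, map_sum, MvPowerSeries.coeff_of_lt_order (hα'.trans_le hMh),
      Finset.sum_eq_zero fun j _ => MvPowerSeries.coeff_of_lt_order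
        (hα'.trans_le (le_order_mul_pderiv (hp0 j) hu j)), sub_zero]
  refine ⟨diagonalOp G v, ⟨fun _ => r, fun _ => hr, ne_top_of_le_ne_top
    (ENNReal.mul_ne_top ENNReal.ofReal_ne_top hv_top) (wnorm_diagonalOp_le hG_le v)⟩, hu, ?_⟩
  rw [← hv]
  simp only [add_mul, Finset.sum_add_distrib, smul_mul_assoc]
  rw [add_sub_right_comm]
  congr 1
  ext α
  simp only [map_sub, map_sum, MvPowerSeries.coeff_smul, coeff_X_mul_pderiv, ← mul_assoc]
  rw [← Finset.sum_mul, ← sub_mul, coeff_diagonalOp, ← mul_assoc]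
  obtain hα | hα := lt_or_ge α.degree M
  · rw [hv_zero hα, mul_zero]
  · rw [hG α hα, one_mul]

end HomologicalEquation

section TriangularBasis

variable {V : Type*} [AddCommGroup V] [Module ℂ V]

lemma exists_hasEigenvalue_dual_eigenvector [FiniteDimensional ℂ V] [Nontrivial V]
    (T : Module.End ℂ V) :
    ∃ μ : ℂ, T.HasEigenvalue μ ∧ ∃ f : Module.Dual ℂ V, f ≠ 0 ∧ ∀ x, f (T x) = μ * f x := by
  obtain ⟨μ, hμ⟩ := Module.End.exists_eigenvalue T
  have range_lt : LinearMap.range (T - algebraMap ℂ _ μ) < ⊤ := by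
    rw [lt_top_iff_ne_top, Ne, LinearMap.range_eq_top, ← LinearMap.injective_iff_surjective,
      ← LinearMap.ker_eq_bot]
    rwa [Module.End.hasEigenvalue_iff, Module.End.eigenspace_def] at hμ
  obtain ⟨f, hf, hf_range⟩ := Submodule.exists_le_ker_of_lt_top _ range_lt
  refine ⟨μ, hμ, f, hf, fun x => sub_eq_zero.1 ?_⟩
  simpa using LinearMap.mem_ker.1 (hf_range ⟨x, rfl⟩)

lemma exists_basis_eq_cons_of_ker {K V : Type*} [Field K] [AddCommGroup V] [Module K V] {d : ℕ}
    {f : Module.Dual K V} (b : Module.Basis (Fin d) K (LinearMap.ker f)) {y : V} (hy : f y ≠ 0) :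
    ∃ b' : Module.Basis (Fin (d + 1)) K V, ⇑b' = Fin.cons y fun i => (b i : V) :=
  ⟨Module.Basis.mkFinCons y b
    (fun c x hx h => by simpa [LinearMap.mem_ker.1 hx, hy] using congrArg f h)
    fun z => ⟨-(f z / f y), by simp [hy]⟩, Module.Basis.coe_mkFinCons ..⟩

lemma hasEigenvalue_of_restrict {K V : Type*} [Field K] [AddCommGroup V] [Module K V]
    {T : Module.End K V} {p : Submodule K V} {hp : ∀ x ∈ p, T x ∈ p} {μ : K}
    (hμ : Module.End.HasEigenvalue (T.restrict hp) μ) : T.HasEigenvalue μ := by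
  obtain ⟨x, hx, hx0⟩ := hμ.exists_hasEigenvector
  exact Module.End.hasEigenvalue_of_hasEigenvector (x := (x : V))
    ⟨Module.End.eigenspace_restrict_le_eigenspace T _ _ ⟨x, hx, rfl⟩, by simpa using hx0⟩

-- The entries above the diagonal become small when the basis vectors are rescaled one by one.
theorem exists_basis_apply_eq_smul_add [FiniteDimensional ℂ V] {d : ℕ} (hd : Module.finrank ℂ V = d)
    (T : Module.End ℂ V) {ε : ℝ} (hε : 0 < ε) :
    ∃ (b : Module.Basis (Fin d) ℂ V) (μ : Fin d → ℂ) (A : Fin d → Fin d → ℂ),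
      (∀ j, T.HasEigenvalue (μ j)) ∧ (∀ j, T (b j) = μ j • b j + ∑ i, A j i • b i) ∧
        ∑ j, ∑ i, ‖A j i‖ < ε := by
  induction d generalizing V ε with
  | zero =>
    exact ⟨Module.finBasisOfFinrankEq ℂ V hd, Fin.elim0, Fin.elim0, (Fin.elim0 ·), (Fin.elim0 ·),
      by simpa⟩
  | succ d ih =>
    have : Nontrivial V := Module.nontrivial_of_finrank_pos (R := ℂ) (by lia)
    obtain ⟨μ₀, hμ₀, f, hf, hfT⟩ := exists_hasEigenvalue_dual_eigenvector T
    have ker_invariant (x : V) (hx : x ∈ LinearMap.ker f) : T x ∈ LinearMap.ker f := by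
      rw [LinearMap.mem_ker] at hx ⊢
      rw [hfT, hx, mul_zero]
    have finrank_ker : Module.finrank ℂ (LinearMap.ker f) = d := by
      have := Module.Dual.finrank_ker_add_one_of_ne_zero hf
      lia
    obtain ⟨b, μ, A, hμ, hb, hA⟩ := ih finrank_ker (T.restrict ker_invariant) (half_pos hε)
    obtain ⟨y, hy⟩ : ∃ y, f y = 1 := LinearMap.surjective hf 1
    have sub_mem : T y - μ₀ • y ∈ LinearMap.ker f := by simp [hfT]
    let s i := b.repr ⟨_, sub_mem⟩ i
    have hs : T y = μ₀ • y + ∑ i, s i • (b i : V) := by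
      rw [← sub_eq_iff_eq_add']
      exact (congrArg (LinearMap.ker f).subtype (b.sum_repr ⟨_, sub_mem⟩)).symm.trans (map_sum ..)
    obtain ⟨t, ht, hts⟩ := exists_pos_mul_lt (half_pos hε) (∑ i, ‖s i‖)
    have ht' : (t : ℂ) ≠ 0 := by exact_mod_cast ht.ne'
    obtain ⟨b', hb'⟩ := exists_basis_eq_cons_of_ker b (y := (t : ℂ) • y) (by simp [hy, ht'])
    refine ⟨b', Fin.cons μ₀ μ, Fin.cons (Fin.cons 0 fun i => t * s i) fun j => Fin.cons 0 (A j),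
      fun j => ?_, fun j => ?_, ?_⟩
    · induction j using Fin.cases with
      | zero => exact hμ₀
      | succ j => exact hasEigenvalue_of_restrict (hμ j)
    · induction j using Fin.cases with
      | zero => simp [hb', Fin.sum_univ_succ, hs, smul_comm μ₀, mul_smul, Finset.smul_sum]
      | succ j => simpa [hb', Fin.sum_univ_succ] using congrArg Subtype.val (hb j)
    · simp only [Fin.sum_univ_succ, Fin.cons_zero, Fin.cons_succ, norm_zero, zero_add, norm_mul,
        Complex.norm_real, Real.norm_of_nonneg ht.le, ← Finset.mul_sum]
      linarith

end TriangularBasis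

section PartialDerivative

variable {σ 𝕜 : Type*} [NormedField 𝕜]

lemma wnorm_half_radius_pderiv_le (ρ : σ → ℝ≥0) (j : σ) (c : MvPowerSeries σ 𝕜) :
    wnorm (fun i => 2⁻¹ * ρ i) (MvPowerSeries.pderiv 𝕜 j c) * ρ j ≤ wnorm ρ c := by
  rw [wnorm, wnorm, ← ENNReal.tsum_mul_right]
  refine (ENNReal.tsum_le_tsum fun α => ?_).trans (ENNReal.tsum_comp_le_tsum_of_injective
    (add_left_injective (Finsupp.single j 1)) _)
  have exponent_le : ‖((α j + 1 : ℕ) : 𝕜)‖₊ * 2⁻¹ ^ α.degree ≤ 1 := by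
    have norm_le : ‖((α j + 1 : ℕ) : 𝕜)‖₊ ≤ (α j + 1 : ℕ) :=
      NNReal.coe_le_coe.1 (by simpa using Nat.norm_cast_le (α := 𝕜) (α j + 1))
    have pow_ge : ((α j + 1 : ℕ) : ℝ≥0) ≤ 2 ^ α.degree := by
      exact_mod_cast (α j).lt_two_pow_self.trans_le
        (Nat.pow_le_pow_right two_pos (Finsupp.le_degree j α))
    rw [inv_pow, ← div_eq_mul_inv]
    exact div_le_one_of_le₀ (norm_le.trans pow_ge) zero_le
  rw [MvPowerSeries.coeff_pderiv, mul_multiPow, multiPow_const, multiPow_add, multiPow_single,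
    pow_one, enorm_eq_nnnorm, enorm_eq_nnnorm, nnnorm_mul, ← Nat.cast_succ]
  norm_cast
  calc _ = ‖((α j + 1 : ℕ) : 𝕜)‖₊ * 2⁻¹ ^ α.degree *
        (‖MvPowerSeries.coeff (α + Finsupp.single j 1) c‖₊ * (multiPow ρ α * ρ j)) := by
        push_cast; ring
    _ ≤ _ := mul_le_of_le_one_left zero_le exponent_le

lemma pderiv_mem_convergent (j : σ) {c : MvPowerSeries σ 𝕜} (hc : c ∈ convergent σ 𝕜) :
    MvPowerSeries.pderiv 𝕜 j c ∈ convergent σ 𝕜 := by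
  obtain ⟨ρ, hρ, hcρ⟩ := hc
  refine ⟨_, fun i => mul_pos (inv_pos.2 two_pos) (hρ i), fun h => hcρ (top_le_iff.1 ?_)⟩
  refine le_of_eq_of_le ?_ (wnorm_half_radius_pderiv_le ρ j c)
  rw [h, ENNReal.top_mul (by simpa using (hρ j).ne')]

/-- Partial differentiation of convergent power series. -/
def convergentPderiv (j : σ) : Derivation 𝕜 (convergent σ 𝕜) (convergent σ 𝕜) :=
  Derivation.mk'
    { toFun c := ⟨MvPowerSeries.pderiv 𝕜 j c.1, pderiv_mem_convergent j c.2⟩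
      map_add' a b := Subtype.ext (map_add (MvPowerSeries.pderiv 𝕜 j) a.1 b.1)
      map_smul' r a := Subtype.ext ((MvPowerSeries.pderiv 𝕜 j).map_smul r a.1) }
    fun a b => Subtype.ext ((MvPowerSeries.pderiv 𝕜 j).leibniz a.1 b.1)

lemma coe_convergentPderiv (j : σ) (c : convergent σ 𝕜) :
    (convergentPderiv j c).1 = MvPowerSeries.pderiv 𝕜 j c.1 := rfl

lemma sum_smul_convergentPderiv_convergentX [Fintype σ] (g : σ → convergent σ 𝕜) (i : σ) :
    (∑ j, g j • convergentPderiv j) (convergentX i) = g i := by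
  classical
  have hX (j : σ) : g j • convergentPderiv j (convergentX i) = if j = i then g j else 0 := by
    ext1
    rw [smul_eq_mul, MulMemClass.coe_mul, coe_convergentPderiv, convergentX,
      MvPowerSeries.pderiv_X, Pi.single_apply]
    split_ifs <;> simp_all
  rw [sum_smul_derivation_apply]
  exact (Finset.sum_congr rfl fun j _ => hX j).trans (by simp)

end PartialDerivative

section LocalSurjectivity

/-- The germ obtained by substituting the coordinate functions `coordOf φ` into a convergent
power series. -/
def seriesIn (φ : CoordChange n) : convergent (Fin n) ℂ →ₐ[ℂ] On n :=
  (pullbackEquiv φ).symm.toAlgHom.comp (seriesGerm n)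

lemma seriesIn_surjective (φ : CoordChange n) : Function.Surjective (seriesIn φ) :=
  (pullbackEquiv φ).symm.surjective.comp seriesGerm_surjective

lemma seriesIn_X (φ : CoordChange n) (i : Fin n) : seriesIn φ (convergentX i) = coordOf φ i :=
  congrArg (pullbackEquiv φ).symm (seriesGerm_X i)

lemma map_seriesIn_span_convergentX (φ : CoordChange n) :
    Ideal.map (seriesIn φ) (Ideal.span (Set.range convergentX)) = mId n := by
  rw [Ideal.map_span, ← Set.range_comp, ← span_coordOf φ]
  exact congrArg (Ideal.span <| Set.range ·) (funext (seriesIn_X φ))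

lemma mem_mId_pow_iff_exists_seriesIn_eq (φ : CoordChange n) {M : ℕ} {g : On n} :
    g ∈ mId n ^ M ↔ ∃ c : convergent (Fin n) ℂ, M ≤ c.1.order ∧ seriesIn φ c = g := by
  rw [← map_seriesIn_span_convergentX φ, ← Ideal.map_pow,
    Ideal.mem_map_iff_of_surjective _ (seriesIn_surjective φ)]
  simp only [mem_span_convergentX_pow_iff]

lemma constantCoeff_eq_zero_of_seriesIn_mem {φ : CoordChange n} {c : convergent (Fin n) ℂ}
    (hc : seriesIn φ c ∈ mId n) : c.1.constantCoeff = 0 := by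
  have hspan := Ideal.mem_map_of_mem (seriesIn φ) (sub_algebraMap_mem_span_convergentX c)
  rw [map_seriesIn_span_convergentX, map_sub, AlgHom.commutes, mem_mId, map_sub,
    mem_mId.1 hc, AlgHom.commutes] at hspan
  simpa using hspan

lemma coe_sum_smul_convergentX {σ 𝕜 : Type*} [NormedField 𝕜] [Fintype σ]
    (c : MvPowerSeries σ 𝕜) :
    (∑ i, MvPowerSeries.coeff (Finsupp.single i 1) c • convergentX i : convergent σ 𝕜).1 =
      linearTerm c := by
  rw [AddSubmonoidClass.coe_finsetSum, linearTerm]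
  refine Finset.sum_congr rfl fun i _ => ?_
  refine (map_smul (MvPowerSeries.monomial (R := 𝕜) (Finsupp.single i 1))
    (MvPowerSeries.coeff (Finsupp.single i 1) c) 1).symm.trans ?_
  rw [smul_eq_mul, mul_one]

lemma gradZero_seriesIn {φ : CoordChange n} {c : convergent (Fin n) ℂ}
    (hc : c.1.constantCoeff = 0) :
    gradZero n (seriesIn φ c) =
      ∑ i, MvPowerSeries.coeff (Finsupp.single i 1) c.1 • gradZero n (coordOf φ i) := by
  have hsub : gradZero n (seriesIn φ (c - ∑ i,
      MvPowerSeries.coeff (Finsupp.single i 1) c.1 • convergentX i)) = 0 := by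
    refine gradZero_eq_zero_of_mem_sq ((mem_mId_pow_iff_exists_seriesIn_eq φ).2 ⟨_, ?_, rfl⟩)
    rw [AddSubgroupClass.coe_sub, coe_sum_smul_convergentX]
    exact two_le_order_sub_linearTerm hc
  simpa [sub_eq_zero, seriesIn_X] using hsub

lemma vfDerivation_mem_mId {δ : Fin n → On n} (hδ : ∀ i, δ i ∈ mId n) (g : On n) :
    vfDerivation δ g ∈ mId n := by
  rw [vfDerivation_apply]
  exact sum_mem fun i _ => Ideal.mul_mem_right _ _ (hδ i)

lemma vfDerivation_seriesIn {φ : CoordChange n} {δ : Fin n → On n}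
    {g : Fin n → convergent (Fin n) ℂ} (hg : ∀ j, seriesIn φ (g j) = vfDerivation δ (coordOf φ j))
    (u : convergent (Fin n) ℂ) :
    vfDerivation δ (seriesIn φ u) = seriesIn φ ((∑ j, g j • convergentPderiv j) u) := by
  refine derivation_algHom_apply (seriesIn φ) (s := Set.range convergentX) ?_
    (fun a => ⟨_, sub_algebraMap_mem_span_convergentX a⟩) ?_ u
  · rw [map_seriesIn_span_convergentX, ← maximalIdeal_On]
    infer_instance
  · rintro _ ⟨i, rfl⟩
    rw [sum_smul_convergentPderiv_convergentX, seriesIn_X, hg]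

lemma exists_vfDerivation_coordOf_eq {δ : Fin n → On n} (hδ : ∀ i, δ i ∈ mId n) {ε : ℝ}
    (hε : 0 < ε) :
    ∃ (φ : CoordChange n) (μ : Fin n → ℂ) (p : Fin n → convergent (Fin n) ℂ),
      (∀ j, Module.End.HasEigenvalue (linPart δ).toLin' (μ j)) ∧
      (∀ j, seriesIn φ (μ j • convergentX j + p j) = vfDerivation δ (coordOf φ j)) ∧
      (∀ j, (p j).1.constantCoeff = 0) ∧
      ∑ j, ∑ i, ‖MvPowerSeries.coeff (Finsupp.single i 1) (p j).1‖ < ε := by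
  obtain ⟨b, μ, A, hμ, hb, hA⟩ := exists_basis_apply_eq_smul_add
    (Module.finrank_fin_fun ℂ) (linPart δ).toLin' hε
  let y j := ∑ k, b j k • coordG k
  have gradZero_y j : gradZero n (y j) = b j := gradZero_sum_smul_coordG (b j)
  have y_mem j : y j ∈ mId n := sum_mem fun k _ =>
    Submodule.smul_of_tower_mem _ _ (coordG_mem_mId k)
  obtain ⟨φ, hφ⟩ := exists_coordChange y_mem (by simpa only [gradZero_y] using b.linearIndependent)
  choose p hp using fun j => seriesIn_surjective φ (vfDerivation δ (y j) - μ j • y j)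
  have p_zero j : (p j).1.constantCoeff = 0 := by
    refine constantCoeff_eq_zero_of_seriesIn_mem (φ := φ) ?_
    rw [hp]
    exact sub_mem (vfDerivation_mem_mId hδ _) (Submodule.smul_of_tower_mem _ _ (y_mem j))
  have coeff_p j i : MvPowerSeries.coeff (Finsupp.single i 1) (p j).1 = A j i := by
    have hgrad := gradZero_seriesIn (φ := φ) (p_zero j)
    rw [hp, map_sub, map_smul, gradZero_vfDerivation hδ, gradZero_y, hb,
      add_sub_cancel_left] at hgrad
    simp only [hφ, gradZero_y] at hgrad
    simpa [Finsupp.single_apply] using (congrArg (b.repr · i) hgrad).symm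
  refine ⟨φ, μ, p, hμ, fun j => ?_, p_zero, by simpa only [coeff_p] using hA⟩
  rw [map_add, map_smul, seriesIn_X, hp, hφ, add_sub_cancel]

lemma exists_eq_of_hasEigenvalue {δ : Fin n → On n} {w : Fin n → ℚ} (hδw : EigsEq δ w) {μ : ℂ}
    (hμ : Module.End.HasEigenvalue (linPart δ).toLin' μ) : ∃ i, μ = w i := by
  rw [Module.End.hasEigenvalue_iff_isRoot_charpoly, Matrix.charpoly_toLin', hδw,
    Polynomial.IsRoot, Polynomial.eval_prod, Finset.prod_eq_zero_iff] at hμ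
  simpa [sub_eq_zero] using hμ

theorem exists_forall_exists_vfDerivation_sub_smul_eq {δ : Fin n → On n} (hδ : ∀ i, δ i ∈ mId n)
    {w : Fin n → ℚ} (hw : ∀ i, 0 < w i) (hδw : EigsEq δ w) (c : ℂ) :
    ∃ M₀, ∀ M ≥ M₀, ∀ h ∈ mId n ^ M, ∃ u ∈ mId n ^ M, vfDerivation δ u - c • u = h := by
  obtain ⟨a, ha, haw⟩ : ∃ a : ℝ, 0 < a ∧ ∀ i, a ≤ w i := by
    obtain ⟨a, ha, haw⟩ := exists_const_pos_le hw
    exact ⟨a, by exact_mod_cast ha, fun i => by exact_mod_cast haw i⟩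
  obtain ⟨φ, μ, p, hμ, hφ, hp0, hpa⟩ := exists_vfDerivation_coordOf_eq hδ (half_pos ha)
  choose i hi using fun j => exists_eq_of_hasEigenvalue hδw (hμ j)
  obtain ⟨M₀, hM₀⟩ := exists_nat_ge (2 * ‖c‖ / a)
  refine ⟨M₀ + 1, fun M hM h hh => ?_⟩
  obtain ⟨k, hk, rfl⟩ := (mem_mId_pow_iff_exists_seriesIn_eq φ).1 hh
  have hcM : 2 * ‖c‖ ≤ a * M := by
    rw [mul_comm a, ← div_le_iff₀ ha]
    exact hM₀.trans (by exact_mod_cast (by lia : M₀ ≤ M))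
  obtain ⟨u, hu, hMu, huk⟩ := exists_sum_mul_pderiv_sub_smul_eq ha (fun j => haw (i j))
    (fun j => (p j).2) hp0 hpa (by lia) hcM k.2 hk
  refine ⟨seriesIn φ ⟨u, hu⟩, (mem_mId_pow_iff_exists_seriesIn_eq φ).2 ⟨_, hMu, rfl⟩, ?_⟩
  rw [vfDerivation_seriesIn hφ, ← map_smul, ← map_sub]
  congr 1
  ext1
  rw [← huk, sum_smul_derivation_apply]
  simp [coe_convergentPderiv, hi, convergentX]

end LocalSurjectivity

section GeneralizedEigenspace

lemma iSupIndep_eq_of_le_of_iSup_le {ι α : Type*} [CompleteLattice α] [IsModularLattice α]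
    {f g : ι → α} (hg : iSupIndep g) (hfg : f ≤ g) (h : ⨆ i, g i ≤ ⨆ i, f i) : f = g := by
  refine funext fun i => (hfg i).antisymm ?_
  calc g i ≤ (f i ⊔ ⨆ (j) (_ : j ≠ i), f j) ⊓ g i :=
        le_inf (((le_iSup g i).trans h).trans_eq (iSup_split_single f i)) le_rfl
    _ = f i ⊔ (⨆ (j) (_ : j ≠ i), f j) ⊓ g i := sup_inf_assoc_of_le _ (hfg i)
    _ ≤ f i ⊔ (⨆ (j) (_ : j ≠ i), g j) ⊓ g i := by gcongr with j; exact hfg j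
    _ = f i := by rw [(hg i).symm.eq_bot, sup_bot_eq]

variable {k V W : Type*} [Field k] [AddCommGroup V] [Module k V] [AddCommGroup W] [Module k W]
  {T : Module.End k V} {L : Module.End k W} {π : V →ₗ[k] W}

lemma map_sub_smul_pow_apply (h : π ∘ₗ T = L ∘ₗ π) (c : k) (N : ℕ) (x : V) :
    π (((T - c • 1) ^ N) x) = ((L - c • 1) ^ N) (π x) := by
  rw [Module.End.pow_apply, Module.End.pow_apply]
  refine Function.Semiconj.iterate_right (fun a => ?_) N x
  simpa using congrArg (· - c • π a) (LinearMap.congr_fun h a)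

lemma map_maxGenEigenspace_le (h : π ∘ₗ T = L ∘ₗ π) (c : k) :
    (T.maxGenEigenspace c).map π ≤ L.maxGenEigenspace c := by
  rintro _ ⟨x, hx, rfl⟩
  obtain ⟨N, hN⟩ := (T.mem_maxGenEigenspace c x).1 hx
  exact (L.mem_maxGenEigenspace c _).2 ⟨N, by rw [← map_sub_smul_pow_apply h, hN, map_zero]⟩

lemma map_maxGenEigenspace_eq_of_surjective (h : π ∘ₗ T = L ∘ₗ π) (hπ : Function.Surjective π)
    (hT : ⨆ c, T.maxGenEigenspace c = ⊤) (c : k) :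
    (T.maxGenEigenspace c).map π = L.maxGenEigenspace c := by
  refine congrFun ((L.independent_maxGenEigenspace.le_iff_eq_of_iSup_eq_top ?_).1
    (map_maxGenEigenspace_le h)) c
  rw [← Submodule.map_iSup, hT, Submodule.map_top, LinearMap.range_eq_top.2 hπ]

lemma inf_iSup_maxGenEigenspace {p : Submodule k V} (hp : p ≤ p.comap T) :
    p ⊓ ⨆ c, T.maxGenEigenspace c = ⨆ c, p ⊓ T.maxGenEigenspace c := by
  refine le_antisymm ?_ (le_inf (iSup_le fun _ => inf_le_left) (iSup_mono fun _ => inf_le_right))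
  rintro x ⟨hxp, hx⟩
  obtain ⟨v, hv, rfl⟩ := (Submodule.mem_iSup_iff_exists_finsupp _ _).1 hx
  have hmk : p.mkQ ∘ₗ T = p.mapQ p T hp ∘ₗ p.mkQ := rfl
  refine sum_mem fun c hc => Submodule.mem_iSup_of_mem c ⟨?_, hv c⟩
  rw [SetLike.mem_coe, ← p.ker_mkQ, LinearMap.mem_ker]
  refine (iSupIndep_iff_finsetSum_eq_zero_imp_eq_zero _).1
    (Module.End.independent_maxGenEigenspace (p.mapQ p T hp)) v.support (fun c => p.mkQ (v c))
    (fun c _ => map_maxGenEigenspace_le hmk c ⟨_, hv c, rfl⟩) ?_ c hc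
  rw [← map_sum, ← LinearMap.mem_ker, p.ker_mkQ]
  exact hxp

lemma exists_sub_mem_maxGenEigenspace {p : Submodule k V} (hp : p ≤ p.comap T) {c : k}
    (hc : ∀ h ∈ p, ∃ u ∈ p, T u - c • u = h) {a : V}
    (ha : p.mkQ a ∈ Module.End.maxGenEigenspace (p.mapQ p T hp) c) :
    ∃ u ∈ p, a - u ∈ T.maxGenEigenspace c := by
  obtain ⟨N, hN⟩ := (Module.End.mem_maxGenEigenspace _ _ _).1 ha
  have hmk : p.mkQ ∘ₗ T = p.mapQ p T hp ∘ₗ p.mkQ := rfl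
  rw [← map_sub_smul_pow_apply hmk, ← LinearMap.mem_ker, p.ker_mkQ] at hN
  have surj (N : ℕ) : ∀ h ∈ p, ∃ u ∈ p, ((T - c • 1) ^ N) u = h := by
    induction N with
    | zero => exact fun h hh => ⟨h, hh, rfl⟩
    | succ N ih =>
      intro h hh
      obtain ⟨v, hv, rfl⟩ := ih h hh
      obtain ⟨u, hu, rfl⟩ := hc v hv
      exact ⟨u, hu, by rw [pow_succ]; rfl⟩
  obtain ⟨u, hu, hTu⟩ := surj N _ hN
  exact ⟨u, hu, (T.mem_maxGenEigenspace c _).2 ⟨N, by rw [map_sub, hTu, sub_self]⟩⟩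

lemma mem_maxGenEigenspace_of_sub_smul_mem {c : k} {x : V}
    (hx : T x - c • x ∈ T.maxGenEigenspace c) : x ∈ T.maxGenEigenspace c := by
  obtain ⟨N, hN⟩ := (T.mem_maxGenEigenspace c _).1 hx
  exact (T.mem_maxGenEigenspace c x).2 ⟨N + 1, by rw [pow_succ]; exact hN⟩

end GeneralizedEigenspace

section DerivationGrading

variable {k A : Type*} [Field k] [CommRing A] [Algebra k A]

lemma mul_mem_maxGenEigenspace (T : Derivation k A A) {c d : k} {a b : A}
    (ha : a ∈ Module.End.maxGenEigenspace (T : A →ₗ[k] A) c)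
    (hb : b ∈ Module.End.maxGenEigenspace (T : A →ₗ[k] A) d) :
    a * b ∈ Module.End.maxGenEigenspace (T : A →ₗ[k] A) (c + d) := by
  obtain ⟨i, hi⟩ := (Module.End.mem_maxGenEigenspace _ _ _).1 ha
  obtain ⟨j, hj⟩ := (Module.End.mem_maxGenEigenspace _ _ _).1 hb
  clear ha hb
  induction hN : i + j using Nat.strong_induction_on generalizing i j a b with
  | _ N ih =>
    obtain - | i := i
    · simp [show a = 0 from hi]
    obtain - | j := j
    · simp [show b = 0 from hj]
    have leibniz : T (a * b) - (c + d) • (a * b) = (T a - c • a) * b + a * (T b - d • b) := by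
      rw [T.leibniz, smul_eq_mul, smul_eq_mul, sub_mul, mul_sub, smul_mul_assoc, mul_smul_comm,
        add_smul]
      ring
    refine mem_maxGenEigenspace_of_sub_smul_mem ?_
    rw [Derivation.coeFn_coe, leibniz]
    exact add_mem (ih _ (by lia) i (by rwa [pow_succ] at hi) (j + 1) hj rfl)
      (ih _ (by lia) (i + 1) hi j (by rwa [pow_succ] at hj) rfl)

lemma gradedMonoid_maxGenEigenspace (T : Derivation k A A) :
    SetLike.GradedMonoid (Module.End.maxGenEigenspace (T : A →ₗ[k] A)) where
  one_mem := mem_maxGenEigenspace_of_sub_smul_mem (by simp)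
  mul_mem _ _ _ _ := mul_mem_maxGenEigenspace T

lemma gradedMonoid_eigenspace (D : Derivation k A A) :
    SetLike.GradedMonoid (Module.End.eigenspace (D : A →ₗ[k] A)) where
  one_mem := by simp
  mul_mem c d a b ha hb := by
    simp only [Module.End.mem_eigenspace_iff, Derivation.coeFn_coe] at ha hb ⊢
    rw [D.leibniz, ha, hb, smul_eq_mul, smul_eq_mul, mul_smul_comm, mul_smul_comm, mul_comm b,
      ← add_smul, add_comm d]

lemma derivation_mem_pow {D : Derivation k A A} {I : Ideal A} (hD : ∀ a ∈ I, D a ∈ I) (K : ℕ)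
    {a : A} (ha : a ∈ I ^ K) : D a ∈ I ^ K := by
  induction K generalizing a with
  | zero => simp
  | succ K ih =>
    rw [pow_succ] at ha ⊢
    induction ha using Submodule.mul_induction_on' with
    | mem_mul_mem x hx y hy =>
      rw [D.leibniz]
      exact add_mem (Ideal.mul_mem_mul hx (hD y hy)) (Ideal.mul_mem_mul_rev (ih hx) hy)
    | add x _ y _ hx hy => simpa using add_mem hx hy

end DerivationGrading

section QuasihomogeneousPart

variable {k A σ : Type*} [Field k] [CommRing A] [Algebra k A] {I : Ideal A}

/-- The space of quasihomogeneous polynomials of degree `c` in the family `y`, where `y i` has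
weight `w i`. -/
def quasihomogeneousPart (y : σ → A) (w : σ → k) (c : k) : Submodule k A :=
  Submodule.span k (multiPow y '' {α : σ →₀ ℕ | Finsupp.weight w α = c})

lemma quasihomogeneousPart_le (B : k → Submodule k A) [SetLike.GradedMonoid B] {y : σ → A}
    {w : σ → k} (hy : ∀ i, y i ∈ B (w i)) (c : k) : quasihomogeneousPart y w c ≤ B c := by
  refine Submodule.span_le.2 ?_
  rintro _ ⟨α, rfl, rfl⟩
  exact SetLike.prod_pow_mem_graded B w y α fun i _ => hy i

lemma finite_quasihomogeneousPart (y : σ → A) {w : σ → k} {c : k}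
    (hc : {α : σ →₀ ℕ | Finsupp.weight w α = c}.Finite) :
    Module.Finite k (quasihomogeneousPart y w c) :=
  FiniteDimensional.span_of_finite k (hc.image _)

variable [Finite σ]

lemma finite_setOf_not_quasihomogeneousPart_le {y : σ → A} (hy : ∀ i, y i ∈ I) (w : σ → k)
    (K : ℕ) : {c | ¬quasihomogeneousPart y w c ≤ (I ^ K).restrictScalars k}.Finite := by
  refine ((Finsupp.finite_of_degree_lt K).image (Finsupp.weight w)).subset fun c hc => ?_
  contrapose! hc
  rw [Set.notMem_ofPred_iff, not_not, quasihomogeneousPart, Submodule.span_le]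
  rintro _ ⟨α, hα, rfl⟩
  have hKα : K ≤ α.degree := not_lt.1 fun hαK => hc ⟨α, hαK, hα⟩
  exact Ideal.pow_le_pow_right hKα (multiPow_mem_pow hy α)

lemma span_multiPow_sup_pow_eq_top (hA : ∀ a : A, ∃ r : k, a - algebraMap k A r ∈ I) {y : σ → A}
    (hy : Ideal.span (Set.range y) = I) (K : ℕ) :
    Submodule.span k (multiPow y '' {α : σ →₀ ℕ | α.degree < K}) ⊔
      (I ^ K).restrictScalars k = ⊤ := by
  have := Fintype.ofFinite σ
  induction K with
  | zero => simp
  | succ K ih =>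
    refine eq_top_iff.2 fun a _ => ?_
    obtain ⟨r, hr⟩ := hA a
    rw [← hy] at hr
    obtain ⟨c, hc⟩ := Ideal.mem_span_range_iff_exists_fun.1 hr
    rw [← add_sub_cancel (algebraMap k A r) a, ← hc]
    refine add_mem (Submodule.mem_sup_left ?_) (sum_mem fun i _ => ?_)
    · rw [Algebra.algebraMap_eq_smul_one]
      exact Submodule.smul_mem _ _ (Submodule.subset_span ⟨0, by simp, multiPow_zero y⟩)
    · have mul_le : (Submodule.span k (multiPow y '' {α : σ →₀ ℕ | α.degree < K}) ⊔
          (I ^ K).restrictScalars k).map (LinearMap.mulRight k (y i)) ≤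
          Submodule.span k (multiPow y '' {α : σ →₀ ℕ | α.degree < K + 1}) ⊔
          (I ^ (K + 1)).restrictScalars k := by
        rw [Submodule.map_sup, Submodule.map_span]
        refine sup_le_sup (Submodule.span_mono ?_) ?_
        · rintro _ ⟨_, ⟨α, hα, rfl⟩, rfl⟩
          exact ⟨α + Finsupp.single i 1, by simpa using hα, by simp [multiPow_add]⟩
        · rintro _ ⟨b, hb, rfl⟩
          rw [pow_succ]
          exact Ideal.mul_mem_mul hb (hy ▸ Ideal.subset_span ⟨i, rfl⟩)
      exact mul_le ⟨c i, ih ▸ Submodule.mem_top, rfl⟩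

lemma iSup_quasihomogeneousPart_sup_pow_eq_top (hA : ∀ a : A, ∃ r : k, a - algebraMap k A r ∈ I)
    {y : σ → A} (hy : Ideal.span (Set.range y) = I) (w : σ → k) (K : ℕ) :
    (⨆ c, quasihomogeneousPart y w c) ⊔ (I ^ K).restrictScalars k = ⊤ := by
  refine eq_top_mono (sup_le_sup_right (Submodule.span_le.2 ?_) _)
    (span_multiPow_sup_pow_eq_top hA hy K)
  rintro _ ⟨α, -, rfl⟩
  exact Submodule.mem_iSup_of_mem _ (Submodule.subset_span ⟨α, rfl, rfl⟩)

lemma finite_quotient_pow (hA : ∀ a : A, ∃ r : k, a - algebraMap k A r ∈ I) {y : σ → A}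
    (hy : Ideal.span (Set.range y) = I) (K : ℕ) :
    Module.Finite k (A ⧸ (I ^ K).restrictScalars k) := by
  let V := Submodule.span k (multiPow y '' {α : σ →₀ ℕ | α.degree < K})
  have : Module.Finite k V :=
    FiniteDimensional.span_of_finite k ((Finsupp.finite_of_degree_lt K).image (multiPow y))
  refine .of_surjective (((I ^ K).restrictScalars k).mkQ.domRestrict V)
    (LinearMap.range_eq_top.1 ?_)
  rw [LinearMap.range_domRestrict, ← Submodule.range_mkQ, ← Submodule.map_top,
    ← span_multiPow_sup_pow_eq_top hA hy K, Submodule.map_sup]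
  simp [V]

end QuasihomogeneousPart

section LocalAlgebra

open IsLocalRing

variable {k A σ : Type*} [Field k] [CommRing A] [Algebra k A] [IsLocalRing A] [IsNoetherianRing A]

lemma eventually_inf_sup_pow_le (V : Submodule k A) [FiniteDimensional k V] (I : Ideal A) :
    ∀ᶠ K in atTop, V ⊓ (I ⊔ maximalIdeal A ^ K).restrictScalars k ≤ I.restrictScalars k := by
  let F : ℕ →o (Submodule k V)ᵒᵈ :=
    { toFun K := OrderDual.toDual
        (((I ⊔ maximalIdeal A ^ K).restrictScalars k).comap V.subtype)
      monotone' K L hKL _ hx := sup_le_sup_left (Ideal.pow_le_pow_right hKL) I hx }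
  obtain ⟨N, hN⟩ := IsArtinian.monotone_stabilizes F
  refine (eventually_ge_atTop N).mono ?_
  rintro K hNK x ⟨hxV, hxK⟩
  refine mem_of_forall_mem_sup_maximalIdeal_pow fun L => ?_
  have hxN : (⟨x, hxV⟩ : V) ∈ (F N).ofDual := sup_le_sup_left (Ideal.pow_le_pow_right hNK) I hxK
  obtain hLN | hNL := le_total L N
  · exact sup_le_sup_left (Ideal.pow_le_pow_right hLN) I hxN
  · rw [hN L hNL] at hxN
    exact hxN

lemma mem_of_forall_mem_sup_restrictScalars_pow {V : Submodule k A} [FiniteDimensional k V] {x : A}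
    (hx : ∀ K, x ∈ V ⊔ (maximalIdeal A ^ K).restrictScalars k) : x ∈ V := by
  obtain ⟨K, hK⟩ := (eventually_inf_sup_pow_le (V ⊔ Submodule.span k {x}) ⊥).exists
  obtain ⟨v, hv, r, hr, rfl⟩ := Submodule.mem_sup.1 (hx K)
  have hrV : r ∈ V ⊔ Submodule.span k {v + r} := by
    simpa using sub_mem (Submodule.mem_sup_right (Submodule.mem_span_singleton_self (v + r)))
      (Submodule.mem_sup_left (T := Submodule.span k {v + r}) hv)
  rw [show r = 0 from hK ⟨hrV, Ideal.mem_sup_right hr⟩, add_zero]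
  exact hv

variable [Finite σ] {T : Derivation k A A} {y : σ → A} {w : σ → k}

/-- Modulo every power of the maximal ideal the two sides agree by independence of the generalized
eigenspaces; as the right-hand side is finite-dimensional, Krull's theorem applies. -/
theorem maxGenEigenspace_eq_quasihomogeneousPart
    (hA : ∀ a : A, ∃ r : k, a - algebraMap k A r ∈ maximalIdeal A)
    (hT : ∀ a ∈ maximalIdeal A, T a ∈ maximalIdeal A)
    (hy : Ideal.span (Set.range y) = maximalIdeal A)
    (hTy : ∀ i, y i ∈ Module.End.maxGenEigenspace (T : A →ₗ[k] A) (w i))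
    (hw : ∀ c, {α : σ →₀ ℕ | Finsupp.weight w α = c}.Finite) (c : k) :
    Module.End.maxGenEigenspace (T : A →ₗ[k] A) c = quasihomogeneousPart y w c := by
  have := gradedMonoid_maxGenEigenspace T
  have := finite_quasihomogeneousPart y (hw c)
  have part_le := quasihomogeneousPart_le (Module.End.maxGenEigenspace (T : A →ₗ[k] A)) hTy
  refine le_antisymm (fun x hx => mem_of_forall_mem_sup_restrictScalars_pow fun K => ?_) (part_le c)
  let P := (maximalIdeal A ^ K).restrictScalars k
  let G := Module.End.maxGenEigenspace (T : A →ₗ[k] A)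
  have iSup_le : ⨆ c, G c ≤ ⨆ c, quasihomogeneousPart y w c ⊔ P ⊓ G c := by
    rw [iSup_sup_eq, ← inf_iSup_maxGenEigenspace fun a ha => derivation_mem_pow hT K ha,
      ← sup_inf_assoc_of_le _ (iSup_mono part_le),
      iSup_quasihomogeneousPart_sup_pow_eq_top hA hy, top_inf_eq]
  have parts_eq := iSupIndep_eq_of_le_of_iSup_le
    (Module.End.independent_maxGenEigenspace (T : Module.End k A))
    (fun c => sup_le (part_le c) inf_le_right) iSup_le
  have le_sup_pow : G c ≤ quasihomogeneousPart y w c ⊔ P :=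
    (congrFun parts_eq c).ge.trans (sup_le_sup_left inf_le_left _)
  exact le_sup_pow hx

theorem span_inter_quasihomogeneousPart
    (hA : ∀ a : A, ∃ r : k, a - algebraMap k A r ∈ maximalIdeal A)
    (hT : ∀ a ∈ maximalIdeal A, T a ∈ maximalIdeal A)
    (hy : Ideal.span (Set.range y) = maximalIdeal A)
    (hTy : ∀ i, y i ∈ Module.End.maxGenEigenspace (T : A →ₗ[k] A) (w i))
    (hw : ∀ c, {α : σ →₀ ℕ | Finsupp.weight w α = c}.Finite)
    {I : Ideal A} (hI : ∀ a ∈ I, T a ∈ I) :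
    Ideal.span {a | a ∈ I ∧ ∃ c, a ∈ quasihomogeneousPart y w c} = I := by
  refine le_antisymm (Ideal.span_le.2 fun a ha => ha.1) fun a ha => ?_
  refine mem_of_forall_mem_sup_maximalIdeal_pow fun K => ?_
  let P (L : ℕ) := (I ⊔ maximalIdeal A ^ L).restrictScalars k
  have stable (c : k) : ∀ᶠ L in atTop, quasihomogeneousPart y w c ⊓ P L ≤ I.restrictScalars k :=
    have := finite_quasihomogeneousPart y (hw c)
    eventually_inf_sup_pow_le _ I
  have y_mem i : y i ∈ maximalIdeal A := hy ▸ Ideal.subset_span ⟨i, rfl⟩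
  obtain ⟨L, hL, hKL⟩ := (((finite_setOf_not_quasihomogeneousPart_le y_mem w K).eventually_all.2
    fun c _ => stable c).and (eventually_ge_atTop K)).exists
  have hTP : P L ≤ (P L).comap (T : A →ₗ[k] A) := fun b hb => by
    obtain ⟨u, hu, v, hv, rfl⟩ := Submodule.mem_sup.1 hb
    change T (u + v) ∈ I ⊔ maximalIdeal A ^ L
    rw [map_add]
    exact Submodule.add_mem_sup (hI u hu) (derivation_mem_pow hT L hv)
  have decomposition : P L = (⨆ c, P L ⊓ quasihomogeneousPart y w c) ⊔
      (maximalIdeal A ^ L).restrictScalars k := by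
    have h := inf_iSup_maxGenEigenspace hTP
    simp only [maxGenEigenspace_eq_quasihomogeneousPart hA hT hy hTy hw] at h
    rw [← h, inf_sup_assoc_of_le _ (show _ ≤ P L from fun b hb => Ideal.mem_sup_right hb),
      iSup_quasihomogeneousPart_sup_pow_eq_top hA hy, inf_top_eq]
  have le_sum : P L ≤ (Ideal.span {a | a ∈ I ∧ ∃ c, a ∈ quasihomogeneousPart y w c} ⊔
      maximalIdeal A ^ K).restrictScalars k := by
    rw [decomposition]
    refine sup_le (iSup_le fun c b hb => ?_) fun b hb =>
      Ideal.mem_sup_right (Ideal.pow_le_pow_right hKL hb)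
    by_cases hc : quasihomogeneousPart y w c ≤ (maximalIdeal A ^ K).restrictScalars k
    · exact Ideal.mem_sup_right (hc hb.2)
    · exact Ideal.mem_sup_left (Ideal.subset_span ⟨hL c hc ⟨hb.2, hb.1⟩, c, hb.2⟩)
  exact le_sum (Ideal.mem_sup_left ha)

end LocalAlgebra

section PositiveWeights

variable {σ k : Type*} [Field k] [CharZero k] {w : σ → ℚ}

lemma weight_ratCast (w : σ → ℚ) (α : σ →₀ ℕ) :
    Finsupp.weight (fun i => (w i : k)) α = (Finsupp.weight w α : ℚ) := by
  simp [Finsupp.weight_apply, Finsupp.sum]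

lemma mul_degree_le_weight {a : ℚ} (ha : ∀ i, a ≤ w i) (α : σ →₀ ℕ) :
    a * α.degree ≤ Finsupp.weight w α := by
  rw [Finsupp.degree_apply, Finsupp.weight_apply, Finsupp.sum, Nat.cast_sum, Finset.mul_sum]
  refine Finset.sum_le_sum fun i _ => ?_
  rw [nsmul_eq_mul, mul_comm]
  exact mul_le_mul_of_nonneg_left (ha i) (Nat.cast_nonneg _)

lemma weight_pos (hw : ∀ i, 0 < w i) {α : σ →₀ ℕ} (hα : α ≠ 0) : 0 < Finsupp.weight w α := by
  obtain ⟨i, hi⟩ := Finsupp.ne_iff.1 hα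
  exact (hw i).trans_le (Finsupp.le_weight_of_ne_zero (fun i => (hw i).le) hi)

lemma finite_setOf_weight_eq [Finite σ] (hw : ∀ i, 0 < w i) (c : k) :
    {α : σ →₀ ℕ | Finsupp.weight (fun i => (w i : k)) α = c}.Finite := by
  obtain ⟨a, ha, haw⟩ := exists_const_pos_le hw
  obtain ⟨d, rfl⟩ | hc := em (∃ d : ℚ, c = d)
  · refine (Finsupp.finite_of_degree_le ⌊d / a⌋₊).subset fun α hα => ?_
    have hαd : Finsupp.weight w α = d := by
      rwa [Set.mem_ofPred_eq, weight_ratCast, Rat.cast_inj] at hα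
    exact Nat.le_floor ((le_div_iff₀' ha).2 (hαd ▸ mul_degree_le_weight haw α))
  · exact Set.finite_empty.subset fun α hα => hc ⟨_, hα.symm.trans (weight_ratCast w α)⟩

lemma exists_pos_mem_quasihomogeneousPart {A : Type*} [CommRing A] [Algebra k A] {I : Ideal A}
    (hI : I ≠ ⊤) (hw : ∀ i, 0 < w i) {y : σ → A} {c : k} {a : A} (haI : a ∈ I)
    (ha : a ∈ quasihomogeneousPart y (fun i => (w i : k)) c) :
    ∃ d : ℚ, 0 < d ∧ a ∈ quasihomogeneousPart y (fun i => (w i : k)) d := by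
  by_cases hc : ∀ α : σ →₀ ℕ, Finsupp.weight (fun i => (w i : k)) α = c → α = 0
  · have mem_span_one : a ∈ Submodule.span k {(1 : A)} := by
      refine Submodule.span_mono ?_ ha
      rintro _ ⟨α, hα, rfl⟩
      rw [hc α hα, multiPow_zero]
      rfl
    obtain ⟨r, rfl⟩ := Submodule.mem_span_singleton.1 mem_span_one
    obtain rfl | hr := eq_or_ne r 0
    · exact ⟨1, one_pos, by simp⟩
    · refine absurd (I.eq_top_of_isUnit_mem haI ?_) hI
      rw [← Algebra.algebraMap_eq_smul_one]
      exact hr.isUnit.map (algebraMap k A)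
  · push Not at hc
    obtain ⟨α, rfl, hα⟩ := hc
    exact ⟨Finsupp.weight w α, weight_pos hw hα, weight_ratCast (k := k) w α ▸ ha⟩

end PositiveWeights

section GeneralizedEigenbasis

lemma exists_basis_mem_maxGenEigenspace {k V ι : Type*} [Field k] [AddCommGroup V] [Module k V]
    (e : Module.Basis ι k V) {L : Module.End k V} (hL : ⨆ c, L.maxGenEigenspace c = ⊤) :
    ∃ (b : Module.Basis ι k V) (μ : ι → k),
      ∀ j, L.HasEigenvalue (μ j) ∧ b j ∈ L.maxGenEigenspace (μ j) := by
  rw [Submodule.iSup_eq_span] at hL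
  let b := Module.Basis.ofSpan hL.ge
  let b' := b.reindex (b.indexEquiv e)
  have hb' j : ∃ c, b' j ∈ L.maxGenEigenspace c :=
    Set.mem_iUnion.1 (Module.Basis.ofSpan_subset hL.ge (b.reindex_apply _ j ▸ ⟨_, rfl⟩))
  choose μ hμ using hb'
  refine ⟨b', μ, fun j => ⟨Module.End.HasUnifEigenvalue.lt (k := ⊤) zero_lt_one ?_, hμ j⟩⟩
  exact (Submodule.ne_bot_iff _).2 ⟨b' j, hμ j, b'.ne_zero j⟩

variable {δ : Fin n → On n} {w : Fin n → ℚ}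

theorem map_gradZero_maxGenEigenspace (hδ : ∀ i, δ i ∈ mId n) (hw : ∀ i, 0 < w i)
    (hδw : EigsEq δ w) (c : ℂ) :
    (Module.End.maxGenEigenspace (vfDerivation δ : On n →ₗ[ℂ] On n) c).map (gradZero n) =
      Module.End.maxGenEigenspace (linPart δ).toLin' c := by
  have semiconj : gradZero n ∘ₗ (vfDerivation δ : On n →ₗ[ℂ] On n) =
      (linPart δ).toLin' ∘ₗ gradZero n := LinearMap.ext (gradZero_vfDerivation hδ)
  refine (map_maxGenEigenspace_le semiconj c).antisymm fun v hv => ?_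
  obtain ⟨M₀, hM₀⟩ := exists_forall_exists_vfDerivation_sub_smul_eq hδ hw hδw c
  let P := (mId n ^ max M₀ 2).restrictScalars ℂ
  have hP : P ≤ P.comap (vfDerivation δ : On n →ₗ[ℂ] On n) := fun a ha =>
    derivation_mem_pow (fun b _ => vfDerivation_mem_mId hδ b) _ ha
  have gradZero_P {u : On n} (hu : u ∈ P) : gradZero n u = 0 :=
    gradZero_eq_zero_of_mem_sq (Ideal.pow_le_pow_right (le_max_right M₀ 2) hu)
  have : Module.Finite ℂ (On n ⧸ P) := finite_quotient_pow
    (fun a => ⟨_, sub_algebraMap_evalZero_mem a⟩) mId_eq_span_coordG.symm _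
  let π : On n ⧸ P →ₗ[ℂ] (Fin n → ℂ) := P.liftQ (gradZero n) fun u hu => gradZero_P hu
  have hπ : Function.Surjective π := fun v =>
    ⟨P.mkQ (∑ i, v i • coordG i), gradZero_sum_smul_coordG v⟩
  have semiconj_π : π ∘ₗ P.mapQ P (vfDerivation δ : On n →ₗ[ℂ] On n) hP =
      (linPart δ).toLin' ∘ₗ π := P.linearMap_qext semiconj
  rw [← map_maxGenEigenspace_eq_of_surjective semiconj_π hπ
    (Module.End.iSup_maxGenEigenspace_eq_top _)] at hv
  obtain ⟨q, hq, rfl⟩ := hv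
  obtain ⟨a, rfl⟩ := P.mkQ_surjective q
  obtain ⟨u, hu, hau⟩ := exists_sub_mem_maxGenEigenspace hP (hM₀ _ (le_max_left M₀ 2)) hq
  refine ⟨a - u, hau, ?_⟩
  rw [map_sub, gradZero_P hu, sub_zero]
  rfl

lemma mem_mId_of_mem_maxGenEigenspace (hδ : ∀ i, δ i ∈ mId n) {c : ℂ} (hc : c ≠ 0) {g : On n}
    (hg : g ∈ Module.End.maxGenEigenspace (vfDerivation δ : On n →ₗ[ℂ] On n) c) : g ∈ mId n := by
  have semiconj : (On.evalZero n).toLinearMap ∘ₗ (vfDerivation δ : On n →ₗ[ℂ] On n) =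
      (0 : Module.End ℂ ℂ) ∘ₗ (On.evalZero n).toLinearMap :=
    LinearMap.ext fun g => mem_mId.1 (vfDerivation_mem_mId hδ g)
  obtain ⟨N, hN⟩ := (Module.End.mem_maxGenEigenspace _ _ _).1
    (map_maxGenEigenspace_le semiconj c ⟨g, hg, rfl⟩)
  rw [zero_sub, ← neg_smul, _root_.smul_pow, one_pow] at hN
  exact mem_mId.2 ((smul_eq_zero.1 hN).resolve_left (pow_ne_zero _ (neg_ne_zero.2 hc)))

theorem exists_coordChange_mem_maxGenEigenspace (hδ : ∀ i, δ i ∈ mId n) (hw : ∀ i, 0 < w i)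
    (hδw : EigsEq δ w) :
    ∃ (φ : CoordChange n) (w' : Fin n → ℚ), (∀ j, 0 < w' j) ∧ ∀ j,
      coordOf φ j ∈ Module.End.maxGenEigenspace (vfDerivation δ : On n →ₗ[ℂ] On n) (w' j) := by
  obtain ⟨b, μ, hb⟩ := exists_basis_mem_maxGenEigenspace (Pi.basisFun ℂ (Fin n))
    (Module.End.iSup_maxGenEigenspace_eq_top (linPart δ).toLin')
  choose i hi using fun j => exists_eq_of_hasEigenvalue hδw (hb j).1
  have exists_lift j : b j ∈ (Module.End.maxGenEigenspace (vfDerivation δ : On n →ₗ[ℂ] On n)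
      (w (i j))).map (gradZero n) := by
    rw [map_gradZero_maxGenEigenspace hδ hw hδw, ← hi]
    exact (hb j).2
  choose y hy hyb using exists_lift
  obtain ⟨φ, rfl⟩ := exists_coordChange
    (fun j => mem_mId_of_mem_maxGenEigenspace hδ (by exact_mod_cast (hw (i j)).ne') (hy j))
    (by simpa only [hyb] using b.linearIndependent)
  exact ⟨φ, fun j => w (i j), fun j => hw (i j), hy⟩

end GeneralizedEigenbasis

section RelativeQuasihomogeneity

variable {X : Set (Fin n → ℂ)} {f : On n}

lemma quasihomogeneousPart_coordOf_le (w : Fin n → ℚ) (φ : CoordChange n) (c : ℂ) :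
    quasihomogeneousPart (coordOf φ) (fun i => (w i : ℂ)) c ≤
      Module.End.eigenspace (eulerDerivation w φ : On n →ₗ[ℂ] On n) c :=
  have := gradedMonoid_eigenspace (eulerDerivation w φ)
  quasihomogeneousPart_le _ (fun i => Module.End.mem_eigenspace_iff.2
    (eulerDerivation_coordOf w φ i)) c

lemma relQH_of_span_eq {w : Fin n → ℚ} {φ : CoordChange n}
    (hf : eulerDerivation w φ f = f) {S : Set (On n)} (hS : Ideal.span S = IX n X)
    (hSd : ∀ g ∈ S, ∃ d : ℚ, 0 < d ∧ eulerDerivation w φ g = (d : ℂ) • g) : RelQH n X f w := by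
  refine ⟨φ, isQH_pullback_iff.2 (by simpa using hf), ?_⟩
  obtain ⟨s, hsS, hs⟩ := (Submodule.fg_span_iff_fg_span_finset_subset S).1
    (IsNoetherian.noetherian (Ideal.span S))
  choose d hd hdg using fun g : s => hSd g (hsS g.2)
  let e := s.equivFin.symm
  refine ⟨s.card, fun j => (e j : On n), fun j => d (e j), ?_, fun j => hd _,
    fun j => isQH_pullback_iff.2 (hdg _)⟩
  rw [← hS, ← Function.comp_def Subtype.val e, e.surjective.range_comp, Subtype.range_coe]
  exact hs.symm

theorem exists_relQH_of_logarithmic_euler (hX : IX n X ≤ mId n) {δ : Fin n → On n}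
    (hδX : δ ∈ ThetaX n X) (hδ : ∀ i, δ i ∈ mId n) (hf : applyVF δ f = f) {w : Fin n → ℚ}
    (hw : ∀ i, 0 < w i) (hδw : EigsEq δ w) :
    ∃ w : Fin n → ℚ, (∀ i, 0 < w i) ∧ RelQH n X f w := by
  obtain ⟨φ, w', hw', hφ⟩ := exists_coordChange_mem_maxGenEigenspace hδ hw hδw
  let y := coordOf φ
  let c i := (w' i : ℂ)
  have residue (a : On n) : ∃ r : ℂ, a - algebraMap ℂ (On n) r ∈ IsLocalRing.maximalIdeal (On n) :=
    ⟨_, maximalIdeal_On.ge (sub_algebraMap_evalZero_mem a)⟩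
  have stable : ∀ a ∈ IsLocalRing.maximalIdeal (On n),
      vfDerivation δ a ∈ IsLocalRing.maximalIdeal (On n) :=
    fun a _ => maximalIdeal_On.ge (vfDerivation_mem_mId hδ a)
  have span_y := (span_coordOf φ).trans maximalIdeal_On.symm
  have mem_part : f ∈ quasihomogeneousPart y c 1 := by
    rw [← maxGenEigenspace_eq_quasihomogeneousPart residue stable span_y hφ
      (finite_setOf_weight_eq hw')]
    exact mem_maxGenEigenspace_of_sub_smul_mem (by simp [vfDerivation_apply, hf])
  have span_parts : Ideal.span {g | g ∈ IX n X ∧ ∃ d, g ∈ quasihomogeneousPart y c d} = IX n X :=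
    span_inter_quasihomogeneousPart residue stable span_y hφ (finite_setOf_weight_eq hw')
      fun g hg => vfDerivation_apply δ g ▸ hδX g hg
  have euler {g : On n} {d : ℂ} (hg : g ∈ quasihomogeneousPart y c d) :
      eulerDerivation w' φ g = d • g :=
    Module.End.mem_eigenspace_iff.1 (quasihomogeneousPart_coordOf_le w' φ d hg)
  refine ⟨w', hw', relQH_of_span_eq (by simpa using euler mem_part) span_parts ?_⟩
  rintro g ⟨hg, d, hgd⟩
  have mId_ne_top : mId n ≠ ⊤ :=
    maximalIdeal_On.symm.trans_ne (IsLocalRing.maximalIdeal.isMaximal _).ne_top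
  obtain ⟨d', hd', hgd'⟩ := exists_pos_mem_quasihomogeneousPart mId_ne_top hw' (hX hg) hgd
  exact ⟨d', hd', euler hgd'⟩

theorem relQH_iff_exists_logarithmic_euler_general (n : ℕ) (X : Set (Fin n → ℂ))
    (hX : (0 : Fin n → ℂ) ∈ closure X) (f : On n) :
    (∃ w : Fin n → ℚ, (∀ i, 0 < w i) ∧ RelQH n X f w) ↔
      ∃ δ : Fin n → On n, δ ∈ ThetaX n X ∧ (∀ i, δ i ∈ mId n) ∧ applyVF δ f = f ∧
        ∃ w : Fin n → ℚ, (∀ i, 0 < w i) ∧ EigsEq δ w := by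
  constructor
  · rintro ⟨w, hw, h⟩
    obtain ⟨δ, hδX, hδ, hf, hδw⟩ := exists_logarithmic_euler_of_relQH h
    exact ⟨δ, hδX, hδ, hf, w, hw, hδw⟩
  · rintro ⟨δ, hδX, hδ, hf, w, hw, hδw⟩
    exact exists_relQH_of_logarithmic_euler (IX_le_mId hX) hδX hδ hf hw hδw

end RelativeQuasihomogeneity

/-- Corollary 3.3: the pair `(f, X)` is relatively quasihomogeneous iff there exists a
logarithmic vector field `δ ∈ Θ_X` with `δ(0) = 0` and `δ(f) = f` whose eigenvalues are
all positive rational numbers. -/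
theorem relQH_iff_exists_logarithmic_euler (n : ℕ) (X : Set (Fin n → ℂ))
    (hX : IsAnalyticGermAt0 n X) (f : On n) (hf : f ∈ mId n) :
    (∃ w : Fin n → ℚ, (∀ i, 0 < w i) ∧ RelQH n X f w) ↔
      ∃ δ : Fin n → On n, δ ∈ ThetaX n X ∧ (∀ i, δ i ∈ mId n) ∧ applyVF δ f = f ∧
        ∃ w : Fin n → ℚ, (∀ i, 0 < w i) ∧ EigsEq δ w :=
  relQH_iff_exists_logarithmic_euler_general n X (subset_closure hX.1) f

end
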